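/- If x is an odd cyclic configuration whose switch count is constant under all iterations of the corrected BFO rule (x ∈ X_s), then x contains no ordered block. -/

import Mathlib

/-- The parity (XOR of all cells) of a cyclic binary configuration. -/
def Par {n : ℕ} [NeZero n] (x : ZMod n → Bool) : ZMod 2 :=
  ∑ i : ZMod n, if x i then 1 else 0

/-- The global CA rule induced by a local rule of radius `r`
on cyclic configurations of length `n`. -/
def globalRule (r : ℕ) (f : (Fin (2*r+1) → Bool) → Bool) {n : ℕ}
    (x : ZMod n → Bool) : ZMod n → Bool :=
  fun i => f (fun j => x (i + ((j : ℕ) : ZMod n) - (r : ZMod n)))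

/-- The active (center-flipping) neighbourhoods of the corrected BFO rule
(transitions T1–T12; the center is cell 4 of 9). -/
def bfoActive (w : Fin 9 → Bool) : Bool :=
  (w 1 && w 2 && w 3 && !w 4 && !w 5) ||               -- T1
  (w 0 && w 1 && w 2 && !w 3 && !w 4) ||               -- T2
  (!w 1 && !w 2 && w 3 && !w 4 && !w 5) ||             -- T3
  (!w 0 && !w 1 && w 2 && !w 3 && !w 4) ||             -- T4
  (!w 3 && w 4 && w 5 && !w 6) ||                      -- T5
  (!w 2 && w 3 && w 4 && !w 5) ||                      -- T6
  (!w 1 && !w 2 && w 3 && !w 4 && w 5 && !w 6) ||      -- T7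
  (!w 2 && !w 3 && w 4 && !w 5 && w 6 && !w 7) ||      -- T8
  (w 3 && w 4 && w 5 && !w 6 && w 7) ||                -- T9
  (w 0 && w 1 && w 2 && !w 3 && w 4 && !w 5) ||        -- T10
  (w 0 && w 1 && w 2 && !w 3 && w 4 && w 5 && w 6) ||  -- T11
  (w 2 && w 3 && w 4 && !w 5 && w 6 && w 7 && !w 8)    -- T12

/-- The corrected BFO local rule (radius 4). -/
def bfoLocal (w : Fin 9 → Bool) : Bool := xor (bfoActive w) (w 4)

/-- The global rule induced by the corrected BFO rule. -/
def bfoGlobal {n : ℕ} (x : ZMod n → Bool) : ZMod n → Bool :=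
  globalRule 4 bfoLocal x

/-- `x i x (i+1)` is a box: the pattern 01 preceded by 1 and followed by 00. -/
def IsBox {n : ℕ} (x : ZMod n → Bool) (i : ZMod n) : Prop :=
  x (i-1) = true ∧ x i = false ∧ x (i+1) = true ∧ x (i+2) = false ∧ x (i+3) = false

/-- Cell `j` belongs to some box of `x`. -/
def InBox {n : ℕ} (x : ZMod n → Bool) (j : ZMod n) : Prop :=
  ∃ i, IsBox x i ∧ (j = i ∨ j = i + 1)

/-- `x` has a switch at position `i`: either a b-switch (a box at `i+1`)
or an r-switch (`x i ≠ x (i+1)` with neither cell in a box). -/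
def IsSwitch {n : ℕ} (x : ZMod n → Bool) (i : ZMod n) : Prop :=
  IsBox x (i+1) ∨ (x i ≠ x (i+1) ∧ ¬ InBox x i ∧ ¬ InBox x (i+1))

/-- The number of switches of the configuration `x`. -/
noncomputable def switchCount {n : ℕ} (x : ZMod n → Bool) : ℕ :=
  Nat.card {i : ZMod n // IsSwitch x i}

/-- The block of length `2k+2` starting at position `i` is an ordered block. -/
def IsOrderedBlock {n : ℕ} (x : ZMod n → Bool) (i : ZMod n) (k : ℕ) : Prop :=
  (∀ j ≤ k, ¬ (x (i + 2*j) = true ∧ x (i + 2*j + 1) = false)) ∧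
  (x i = false ∧ x (i+1) = true) ∧
  ¬ (x (i + 2*k) = false ∧ x (i + 2*k + 1) = true) ∧
  (x (i + 2*k) = true ∧ x (i + 2*k + 1) = true → x (i + 2*k + 2) = false)

/-- An ordered block which is not a proper sub-block of another ordered block. -/
def IsMaximalOrderedBlock {n : ℕ} (x : ZMod n → Bool) (i : ZMod n) (k : ℕ) : Prop :=
  IsOrderedBlock x i k ∧
  ∀ (i' : ZMod n) (k' d : ℕ), IsOrderedBlock x i' k' →
    i = i' + 2*d → 2*d + 2*k + 2 ≤ 2*k' + 2 → d = 0 ∧ k = k'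

/-- `x` contains the word `w` starting at position `i`. -/
def ContainsAt {n : ℕ} (x : ZMod n → Bool) (i : ZMod n) (w : List Bool) : Prop :=
  ∀ j : Fin w.length, x (i + ((j : ℕ) : ZMod n)) = w.get j

/-- `x` belongs to `X_s`: the switch count is constant during the whole evolution
under the corrected BFO rule. -/
def InXs {n : ℕ} (x : ZMod n → Bool) : Prop :=
  ∀ t : ℕ, switchCount (bfoGlobal^[t] x) = switchCount x

/-- Membership of the neighbourhood of cell `i` in one of the AT pairs
`T_{1,2}`, `T_{3,4}` (center at `i`). -/
def MatchT1234 {n : ℕ} (y : ZMod n → Bool) (i : ZMod n) : Prop :=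
  (y (i-3) = true ∧ y (i-2) = true ∧ y (i-1) = true ∧ y i = false ∧ y (i+1) = false) ∨
  (y (i-4) = true ∧ y (i-3) = true ∧ y (i-2) = true ∧ y (i-1) = false ∧ y i = false) ∨
  (y (i-3) = false ∧ y (i-2) = false ∧ y (i-1) = true ∧ y i = false ∧ y (i+1) = false) ∨
  (y (i-4) = false ∧ y (i-3) = false ∧ y (i-2) = true ∧ y (i-1) = false ∧ y i = false)

/-- The `k`-fold concatenation of a configuration of length `n`. -/
def concatK {n : ℕ} (k : ℕ) (x : ZMod n → Bool) : ZMod (k*n) → Bool :=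
  fun i => x ((i.val : ZMod n))


/-- The local rule as a function of nine Booleans. -/
def loc9 (a b c d e f g h i : Bool) : Bool :=
  xor ((b && c && d && !e && !f) || (a && b && c && !d && !e) ||
  (!b && !c && d && !e && !f) || (!a && !b && c && !d && !e) ||
  (!d && e && f && !g) || (!c && d && e && !f) ||
  (!b && !c && d && !e && f && !g) || (!c && !d && e && !f && g && !h) ||
  (d && e && f && !g && h) || (a && b && c && !d && e && !f) ||
  (a && b && c && !d && e && f && g) || (c && d && e && !f && g && h && !i)) e

/-- The list starts with a word that forces a loss of switches in one step. -/
def badl : List Bool → Bool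
  | false :: true :: true :: false :: false :: _ => true
  | false :: true :: true :: false :: true :: true :: _ => true
  | true :: false :: true :: false :: true :: true :: _ => true
  | false :: true :: true :: false :: true :: false :: true :: _ => true
  | true :: true :: false :: false :: true :: false :: false :: _ => true
  | true :: true :: false :: false :: true :: true :: true :: _ => true
  | false :: false :: true :: false :: false :: true :: false :: false :: _ => true
  | false :: false :: true :: false :: false :: true :: true :: true :: _ => true
  | false :: true :: false :: true :: false :: true :: false :: false :: _ => true
  | true :: true :: false :: false :: true :: false :: true :: true :: _ => true
  | false :: false :: true :: false :: false :: true :: false :: true :: true :: _ => true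
  | _ => false

/-- A front at `f`, in terms of the cells `f-3, …, f+1`. -/
def frb (a b c d e : Bool) : Bool := c && !d && !(a && !b && !e)

/-- A table of values of the potential. -/
def phiT : ℕ := 3342867541878272282657869280198024797397580006974519462058117881142972159501628337145532560857568763037325967308231063168215958668853757868488642019995718993283217604796706203823709810810688467233833781530310783772479882755668116373045688708259059226140877294999496912098439673260126309014669821438273751043501654776589703344321044244494071551108117872662474322208345849884120315804279888669282261203714471603038953446047125734438443581397407344192745884420702136110681774540154389933361170055078252662788937617576934180186070723386266521388250304392720545716250635473389385625122247784393705058903772353394124526318334467371061814753143718974210110659590846596763862520860415567981596626138927080007028675206389821562471021648725816919198742390192308643652735711465971027871391547536696448605957680100060380044332568575596706688516791033531302186397127515143475542195675211732525677919241619457911673486452433139501200722212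

/-- The potential. -/
def phi (a b c d e f g h i j : Bool) : ℕ :=
  (phiT >>> (3 * (512 * a.toNat + 256 * b.toNat + 128 * c.toNat + 64 * d.toNat + 32 * e.toNat
    + 16 * f.toNat + 8 * g.toNat + 4 * h.toNat + 2 * i.toNat + j.toNat))) % 8

theorem local_ineq : ∀ a b c d e f g h i j k l m : Bool,
    2 * (frb (loc9 a b c d e f g h i) (loc9 b c d e f g h i j) (loc9 c d e f g h i j k)
      (loc9 d e f g h i j k l) (loc9 e f g h i j k l m)).toNat + phi a b c d e f g h i j
      + (badl [a, b, c, d, e, f, g, h, i]).toNat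
    ≤ 2 * (frb e f g h i).toNat + phi b c d e f g h i j k := by
  decide +kernel

/-- The rule on configurations indexed by any ring. -/
def stp {A : Type*} [CommRing A] (y : A → Bool) (i : A) : Bool :=
  loc9 (y (i-4)) (y (i-3)) (y (i-2)) (y (i-1)) (y i) (y (i+1)) (y (i+2)) (y (i+3)) (y (i+4))

/-- A front of a configuration. -/
def fr {A : Type*} [CommRing A] (y : A → Bool) (i : A) : Bool :=
  frb (y (i-3)) (y (i-2)) (y (i-1)) (y i) (y (i+1))

theorem bfoGlobal_eq {n : ℕ} (x : ZMod n → Bool) : bfoGlobal x = stp x := by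
  funext i
  have e0 : i + ((0:ℕ) : ZMod n) - ((4:ℕ) : ZMod n) = i - 4 := by push_cast; ring
  have e1 : i + ((1:ℕ) : ZMod n) - ((4:ℕ) : ZMod n) = i - 3 := by push_cast; ring
  have e2 : i + ((2:ℕ) : ZMod n) - ((4:ℕ) : ZMod n) = i - 2 := by push_cast; ring
  have e3 : i + ((3:ℕ) : ZMod n) - ((4:ℕ) : ZMod n) = i - 1 := by push_cast; ring
  have e4 : i + ((4:ℕ) : ZMod n) - ((4:ℕ) : ZMod n) = i := by push_cast; ring
  have e5 : i + ((5:ℕ) : ZMod n) - ((4:ℕ) : ZMod n) = i + 1 := by push_cast; ring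
  have e6 : i + ((6:ℕ) : ZMod n) - ((4:ℕ) : ZMod n) = i + 2 := by push_cast; ring
  have e7 : i + ((7:ℕ) : ZMod n) - ((4:ℕ) : ZMod n) = i + 3 := by push_cast; ring
  have e8 : i + ((8:ℕ) : ZMod n) - ((4:ℕ) : ZMod n) = i + 4 := by push_cast; ring
  unfold stp
  rw [← e0, ← e1, ← e2, ← e3, ← e5, ← e6, ← e7, ← e8]
  conv_rhs => arg 5; rw [← e4]
  rfl

/-- Box on five cells. -/
def boxb (a b c d e : Bool) : Bool := a && !b && c && !d && !e

/-- Switch at the third of seven cells. -/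
def swb (a b c d e f g : Bool) : Bool :=
  boxb c d e f g || (xor c d && !(boxb b c d e f || boxb a b c d e) &&
    !(boxb c d e f g || boxb b c d e f))

theorem switch_ident : ∀ a b c d e f g : Bool,
    (swb a b c d e f g).toNat + (boxb b c d e f).toNat + c.toNat
      = 2 * (frb a b c d e).toNat + (boxb a b c d e).toNat + d.toNat := by
  decide +kernel

theorem isBox_iff {n : ℕ} (x : ZMod n → Bool) (i : ZMod n) :
    IsBox x i ↔ boxb (x (i-1)) (x i) (x (i+1)) (x (i+2)) (x (i+3)) = true := by
  unfold IsBox boxb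
  simp [and_assoc]

theorem inBox_iff {n : ℕ} (x : ZMod n → Bool) (j : ZMod n) :
    InBox x j ↔ (IsBox x j ∨ IsBox x (j-1)) := by
  constructor
  · rintro ⟨i, h, rfl | rfl⟩
    · exact Or.inl h
    · right; simpa using h
  · rintro (h | h)
    · exact ⟨j, h, Or.inl rfl⟩
    · exact ⟨j-1, h, Or.inr (by ring)⟩

theorem isSwitch_iff {n : ℕ} (x : ZMod n → Bool) (i : ZMod n) :
    IsSwitch x i ↔ swb (x (i-2)) (x (i-1)) (x i) (x (i+1)) (x (i+2)) (x (i+3)) (x (i+4)) = true := by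
  unfold IsSwitch swb
  rw [inBox_iff, inBox_iff, isBox_iff, isBox_iff, isBox_iff, isBox_iff]
  have a1 : i + 1 - 1 = i := by ring
  have a2 : i + 1 + 1 = i + 2 := by ring
  have a3 : i + 1 + 2 = i + 3 := by ring
  have a4 : i + 1 + 3 = i + 4 := by ring
  have a5 : i - 1 - 1 = i - 2 := by ring
  have a6 : i - 1 + 1 = i := by ring
  have a7 : i - 1 + 2 = i + 1 := by ring
  have a8 : i - 1 + 3 = i + 2 := by ring
  simp only [a1, a2, a3, a4, a5, a6, a7, a8]
  generalize boxb (x i) (x (i+1)) (x (i+2)) (x (i+3)) (x (i+4)) = p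
  generalize boxb (x (i-1)) (x i) (x (i+1)) (x (i+2)) (x (i+3)) = q
  generalize boxb (x (i-2)) (x (i-1)) (x i) (x (i+1)) (x (i+2)) = r
  generalize x i = s
  generalize x (i+1) = t
  revert p q r s t
  decide

theorem sum_shift {n : ℕ} [NeZero n] (f : ZMod n → ℕ) (c : ZMod n) :
    ∑ i, f (i + c) = ∑ i, f i :=
  Equiv.sum_comp (Equiv.addRight c) f

theorem switchCount_eq {n : ℕ} [NeZero n] (x : ZMod n → Bool) :
    switchCount x = 2 * ∑ i, (fr x i).toNat := by
  classical
  have h1 : switchCount x = ∑ i, (swb (x (i-2)) (x (i-1)) (x i) (x (i+1)) (x (i+2)) (x (i+3)) (x (i+4))).toNat := by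
    unfold switchCount
    rw [Nat.card_eq_fintype_card, Fintype.card_subtype, Finset.card_filter]
    refine Finset.sum_congr rfl fun i _ => ?_
    rw [isSwitch_iff]
    cases swb (x (i-2)) (x (i-1)) (x i) (x (i+1)) (x (i+2)) (x (i+3)) (x (i+4)) <;> simp
  have h2 := Finset.sum_congr (rfl : (Finset.univ : Finset (ZMod n)) = Finset.univ)
    (fun i _ => switch_ident (x (i-2)) (x (i-1)) (x i) (x (i+1)) (x (i+2)) (x (i+3)) (x (i+4)))
  simp only [Finset.sum_add_distrib, ← Finset.mul_sum] at h2
  have h3 := sum_shift (fun i => (x i).toNat) 1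
  have h4 := sum_shift (fun i => (fr x i).toNat) 1
  have h5 := sum_shift (fun i => (boxb (x (i-2)) (x (i-1)) (x i) (x (i+1)) (x (i+2))).toNat) 1
  have a1 : ∀ i : ZMod n, i + 1 - 1 = i := fun i => by ring
  have a2 : ∀ i : ZMod n, i + 1 + 1 = i + 2 := fun i => by ring
  have a3 : ∀ i : ZMod n, i + 1 + 2 = i + 3 := fun i => by ring
  have a4 : ∀ i : ZMod n, i + 1 - 2 = i - 1 := fun i => by ring
  have a5 : ∀ i : ZMod n, i + 1 - 3 = i - 2 := fun i => by ring
  simp only [fr, a1, a2, a3, a4, a5] at h3 h4 h5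
  simp only [fr]
  omega

/-- The nine cells starting at `i` form no bad prefix, for all `i`. -/
def NF {A : Type*} [CommRing A] (y : A → Bool) : Prop :=
  ∀ i, badl [y i, y (i+1), y (i+2), y (i+3), y (i+4), y (i+5), y (i+6), y (i+7), y (i+8)] = false

theorem loss {n : ℕ} [NeZero n] (x : ZMod n → Bool)
    (h : switchCount (stp x) = switchCount x) : NF x := by
  rw [switchCount_eq, switchCount_eq] at h
  have h2 : ∑ i : ZMod n, _ ≤ ∑ i : ZMod n, _ := Finset.sum_le_sum
    (fun i _ => local_ineq (x (i-7)) (x (i-6)) (x (i-5)) (x (i-4)) (x (i-3)) (x (i-2)) (x (i-1)) (x i)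
      (x (i+1)) (x (i+2)) (x (i+3)) (x (i+4)) (x (i+5)))
  simp only [Finset.sum_add_distrib, ← Finset.mul_sum] at h2
  have h3 := sum_shift (fun i => phi (x (i-7)) (x (i-6)) (x (i-5)) (x (i-4)) (x (i-3)) (x (i-2)) (x (i-1)) (x i)
      (x (i+1)) (x (i+2))) 1
  have e : ∀ i : ZMod n, fr (stp x) i = frb
      (loc9 (x (i-7)) (x (i-6)) (x (i-5)) (x (i-4)) (x (i-3)) (x (i-2)) (x (i-1)) (x i) (x (i+1)))
      (loc9 (x (i-6)) (x (i-5)) (x (i-4)) (x (i-3)) (x (i-2)) (x (i-1)) (x i) (x (i+1)) (x (i+2)))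
      (loc9 (x (i-5)) (x (i-4)) (x (i-3)) (x (i-2)) (x (i-1)) (x i) (x (i+1)) (x (i+2)) (x (i+3)))
      (loc9 (x (i-4)) (x (i-3)) (x (i-2)) (x (i-1)) (x i) (x (i+1)) (x (i+2)) (x (i+3)) (x (i+4)))
      (loc9 (x (i-3)) (x (i-2)) (x (i-1)) (x i) (x (i+1)) (x (i+2)) (x (i+3)) (x (i+4)) (x (i+5))) := by
    intro i
    unfold fr stp
    ring_nf
  have a1 : ∀ i : ZMod n, i + 1 - 7 = i - 6 := fun i => by ring
  have a2 : ∀ i : ZMod n, i + 1 - 6 = i - 5 := fun i => by ring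
  have a3 : ∀ i : ZMod n, i + 1 - 5 = i - 4 := fun i => by ring
  have a4 : ∀ i : ZMod n, i + 1 - 4 = i - 3 := fun i => by ring
  have a5 : ∀ i : ZMod n, i + 1 - 3 = i - 2 := fun i => by ring
  have a6 : ∀ i : ZMod n, i + 1 - 2 = i - 1 := fun i => by ring
  have a7 : ∀ i : ZMod n, i + 1 - 1 = i := fun i => by ring
  have a8 : ∀ i : ZMod n, i + 1 + 1 = i + 2 := fun i => by ring
  have a9 : ∀ i : ZMod n, i + 1 + 2 = i + 3 := fun i => by ring
  simp only [a1, a2, a3, a4, a5, a6, a7, a8, a9] at h3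
  simp only [← e] at h2
  have e2 : ∀ i : ZMod n, frb (x (i-3)) (x (i-2)) (x (i-1)) (x i) (x (i+1)) = fr x i := fun i => rfl
  simp only [e2] at h2
  have h4 : ∑ i : ZMod n, (badl [x (i-7), x (i-6), x (i-5), x (i-4), x (i-3), x (i-2), x (i-1), x i, x (i+1)]).toNat = 0 := by
    omega
  intro i
  have h5 := (Finset.sum_eq_zero_iff.mp h4) (i+7) (Finset.mem_univ _)
  have b1 : i + 7 - 7 = i := by ring
  have b2 : i + 7 - 6 = i + 1 := by ring
  have b3 : i + 7 - 5 = i + 2 := by ring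
  have b4 : i + 7 - 4 = i + 3 := by ring
  have b5 : i + 7 - 3 = i + 4 := by ring
  have b6 : i + 7 - 2 = i + 5 := by ring
  have b7 : i + 7 - 1 = i + 6 := by ring
  have b8 : i + 7 + 1 = i + 8 := by ring
  simp only [b1, b2, b3, b4, b5, b6, b7, b8] at h5
  simpa using h5

/-- All iterates are free of bad words and periodic. -/
def Good (n : ℕ) (y : ℤ → Bool) : Prop :=
  (∀ t : ℕ, NF (stp^[t] y)) ∧ ∀ k, y (k + n) = y k

theorem stp_cast {n : ℕ} (x : ZMod n → Bool) :
    stp (fun k : ℤ => x (k : ZMod n)) = fun k : ℤ => stp x (k : ZMod n) := by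
  funext k
  simp [stp]

theorem iter_cast {n : ℕ} (x : ZMod n → Bool) (t : ℕ) :
    stp^[t] (fun k : ℤ => x (k : ZMod n)) = fun k : ℤ => (stp^[t] x) (k : ZMod n) := by
  induction t generalizing x with
  | zero => rfl
  | succ t ih => rw [Function.iterate_succ_apply, Function.iterate_succ_apply, stp_cast, ih]

theorem good_of_inXs {n : ℕ} [NeZero n] (x : ZMod n → Bool) (hx : InXs x) :
    Good n (fun k : ℤ => x (k : ZMod n)) := by
  have hb : (bfoGlobal : (ZMod n → Bool) → _) = stp := funext bfoGlobal_eq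
  constructor
  · intro t
    have h : NF (stp^[t] x) := by
      apply loss
      have h1 := hx t
      have h2 := hx (t+1)
      rw [hb] at h1 h2
      rw [← Function.iterate_succ_apply' stp t x, h1, h2]
    rw [iter_cast]
    intro i
    have := h (i : ZMod n)
    simpa using this
  · intro k; simp

theorem Good.step {n : ℕ} {y : ℤ → Bool} (h : Good n y) : Good n (stp y) := by
  refine ⟨fun t => ?_, fun k => ?_⟩
  · have := h.1 (t+1)
    rwa [Function.iterate_succ_apply] at this
  · unfold stp
    have : ∀ j : ℤ, y (k + n + j) = y (k + j) := fun j => by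
      rw [← h.2 (k+j)]; congr 1; ring
    simp only [sub_eq_add_neg, this, h.2]

/-- The list starts with a bad word or a long alternating word. -/
def bad2 : List Bool → Bool
  | false :: true :: true :: false :: false :: _ => true
  | false :: true :: true :: false :: true :: true :: _ => true
  | true :: false :: true :: false :: true :: true :: _ => true
  | false :: true :: true :: false :: true :: false :: true :: _ => true
  | true :: true :: false :: false :: true :: false :: false :: _ => true
  | true :: true :: false :: false :: true :: true :: true :: _ => true
  | false :: false :: true :: false :: false :: true :: false :: false :: _ => true
  | false :: false :: true :: false :: false :: true :: true :: true :: _ => true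
  | false :: true :: false :: true :: false :: true :: false :: false :: _ => true
  | true :: true :: false :: false :: true :: false :: true :: true :: _ => true
  | false :: false :: true :: false :: false :: true :: false :: true :: true :: _ => true
  | true :: false :: true :: false :: true :: false :: true :: _ => true
  | false :: true :: false :: true :: false :: true :: false :: _ => true
  | _ => false

/-- No bad or long alternating words. -/
def NF2 (y : ℤ → Bool) : Prop :=
  ∀ i, bad2 [y i, y (i+1), y (i+2), y (i+3), y (i+4), y (i+5), y (i+6), y (i+7), y (i+8)] = false

set_option synthInstance.maxHeartbeats 400000 in
set_option synthInstance.maxSize 4000 in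
theorem alt_ext : ∀ a b c d e f g h i j k : Bool, badl [a, b, c, d, e, f, g, h, i] = false →
    badl [b, c, d, e, f, g, h, i, j] = false → badl [c, d, e, f, g, h, i, j, k] = false →
    (a ≠ b ∧ b ≠ c ∧ c ≠ d ∧ d ≠ e ∧ e ≠ f ∧ f ≠ g) → g ≠ h := by
  decide +kernel

set_option synthInstance.maxHeartbeats 400000 in
set_option synthInstance.maxSize 4000 in
theorem bad2_cases : ∀ a b c d e f g h i : Bool, badl [a, b, c, d, e, f, g, h, i] = false →
    bad2 [a, b, c, d, e, f, g, h, i] = true →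
    (a ≠ b ∧ b ≠ c ∧ c ≠ d ∧ d ≠ e ∧ e ≠ f ∧ f ≠ g) := by
  decide +kernel

theorem NF2_of_good {n : ℕ} (hn : Odd n) {y : ℤ → Bool} (h : Good n y) : NF2 y := by
  have hN : NF y := h.1 0
  intro i
  by_contra hb
  rw [Bool.not_eq_false] at hb
  have h0 := bad2_cases _ _ _ _ _ _ _ _ _ (hN i) hb
  have key : ∀ k : ℕ, y (i+k) ≠ y (i+k+1) ∧ y (i+k+1) ≠ y (i+k+2) ∧ y (i+k+2) ≠ y (i+k+3) ∧
      y (i+k+3) ≠ y (i+k+4) ∧ y (i+k+4) ≠ y (i+k+5) ∧ y (i+k+5) ≠ y (i+k+6) := by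
    intro k
    induction k with
    | zero => simpa using h0
    | succ k ih =>
      have a0 := hN (i+k)
      have a1 := hN (i+k+1)
      have a2 := hN (i+k+2)
      ring_nf at a0 a1 a2 ih
      have := alt_ext _ _ _ _ _ _ _ _ _ _ _ a0 a1 a2 ih
      push_cast
      ring_nf
      tauto
  have key2 : ∀ k : ℕ, y (i+2*k) = y i := by
    intro k
    induction k with
    | zero => simp
    | succ k ih =>
      have a := key (2*k)
      rw [← ih]
      push_cast at a ⊢
      have e : i + 2 * ((k:ℤ) + 1) = i + 2 * k + 2 := by ring
      rw [e]
      have a1 := a.1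
      have a2 := a.2.1
      revert a1 a2
      generalize y (i + 2*k) = p
      generalize y (i + 2*k+1) = q
      generalize y (i + 2*k+2) = r
      revert p q r; decide
  obtain ⟨m, rfl⟩ := hn
  have a := key2 m
  have b := (key (2*m)).1
  have c := h.2 i
  push_cast at b c
  rw [← add_assoc] at c
  rw [a, c] at b
  exact b rfl

/-- The window of length `m` at `a`. -/
def wl (y : ℤ → Bool) : ℤ → ℕ → List Bool
  | _, 0 => []
  | a, m+1 => y a :: wl y (a+1) m

set_option synthInstance.maxHeartbeats 400000 in
set_option synthInstance.maxSize 4000 in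
theorem bad2_short : ∀ a b c d e f g h i : Bool, bad2 [a, b, c, d, e, f, g, h, i] = false →
    bad2 [a, b, c, d, e, f, g, h] = false ∧ bad2 [a, b, c, d, e, f, g] = false ∧
    bad2 [a, b, c, d, e, f] = false ∧ bad2 [a, b, c, d, e] = false ∧ bad2 [a, b, c, d] = false ∧
    bad2 [a, b, c] = false ∧ bad2 [a, b] = false ∧ bad2 [a] = false ∧ bad2 [] = false := by
  decide +kernel

theorem bad2_long (a b c d e f g h i : Bool) (l : List Bool) :
    bad2 (a :: b :: c :: d :: e :: f :: g :: h :: i :: l) = bad2 [a, b, c, d, e, f, g, h, i] := by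
  cases a <;> cases b <;> cases c <;> cases d <;> cases e <;> cases f <;> cases g <;> cases h <;>
    cases i <;> rfl

theorem bad2_wl {y : ℤ → Bool} (h : NF2 y) (a : ℤ) (m : ℕ) : bad2 (wl y a m) = false := by
  have e1 : a + 1 + 1 = a + 2 := by ring
  have e2 : a + 2 + 1 = a + 3 := by ring
  have e3 : a + 3 + 1 = a + 4 := by ring
  have e4 : a + 4 + 1 = a + 5 := by ring
  have e5 : a + 5 + 1 = a + 6 := by ring
  have e6 : a + 6 + 1 = a + 7 := by ring
  have e7 : a + 7 + 1 = a + 8 := by ring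
  have h1 := h a
  have h2 := bad2_short _ _ _ _ _ _ _ _ _ h1
  obtain ⟨c1, c2, c3, c4, c5, c6, c7, c8, c9⟩ := h2
  match m with
  | 0 => exact c9
  | 1 => exact c8
  | 2 => exact c7
  | 3 => simp only [wl, e1]; exact c6
  | 4 => simp only [wl, e1, e2]; exact c5
  | 5 => simp only [wl, e1, e2, e3]; exact c4
  | 6 => simp only [wl, e1, e2, e3, e4]; exact c3
  | 7 => simp only [wl, e1, e2, e3, e4, e5]; exact c2
  | 8 => simp only [wl, e1, e2, e3, e4, e5, e6]; exact c1
  | m+9 => simp only [wl, e1, e2, e3, e4, e5, e6, e7]; rw [bad2_long]; exact h1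

theorem getD_wl (y : ℤ → Bool) (m : ℕ) : ∀ (a : ℤ) (k : ℕ), k < m →
    (wl y a m).getD k false = y (a + k) := by
  induction m with
  | zero => intro a k h; omega
  | succ m ih =>
    intro a k h
    cases k with
    | zero => simp [wl]
    | succ k =>
      have := ih (a+1) k (by omega)
      simp only [wl, List.getD_cons_succ, this]
      push_cast; congr 1; ring

/-- Extend the window of the image by one cell on the left, discarding bad words. -/
def ext : List Bool → List Bool → (List Bool → Bool) → Bool
  | a :: b :: c :: d :: e :: f :: g :: h :: i :: _, v, k =>
      cond (loc9 a b c d e f g h i) (bad2 (true :: v) || k (true :: v))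
        (bad2 (false :: v) || k (false :: v))
  | _, v, k => k v

theorem ext_wl {y : ℤ → Bool} (h' : NF2 (stp y)) (a : ℤ) (m : ℕ) (K : List Bool → Bool)
    (h : ext (wl y a (m+1)) (wl (stp y) (a+5) (m-8)) K = true) :
    K (wl (stp y) (a+4) (m+1-8)) = true := by
  match m, h with
  | 0, h => exact h
  | 1, h => exact h
  | 2, h => exact h
  | 3, h => exact h
  | 4, h => exact h
  | 5, h => exact h
  | 6, h => exact h
  | 7, h => exact h
  | m+8, h =>
    have e0 : m + 8 + 1 - 8 = m + 1 := by omega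
    have e1 : m + 8 - 8 = m := by omega
    have hb := bad2_wl h' (a+4) (m+1)
    have hs : loc9 (y a) (y (a+1)) (y (a+1+1)) (y (a+1+1+1)) (y (a+1+1+1+1)) (y (a+1+1+1+1+1))
        (y (a+1+1+1+1+1+1)) (y (a+1+1+1+1+1+1+1)) (y (a+1+1+1+1+1+1+1+1)) = stp y (a+4) := by
      unfold stp
      ring_nf
    rw [e1] at h
    rw [e0]
    have e2 : a + 4 + 1 = a + 5 := by ring
    simp only [wl, ext, hs, e2] at h hb ⊢
    cases hc : stp y (a+4)
    · rw [hc] at h hb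
      simpa [hb] using h
    · rw [hc] at h hb
      simpa [hb] using h

/-- Enumeration of the bad word free lists matching a reversed pattern (`2` is a free cell). -/
def chk (P : List Bool → List Bool → Bool) : List ℕ → List Bool → List Bool → Bool
  | [], l, v => P l v
  | 0 :: p, l, v => bad2 (false :: l) || ext (false :: l) v (chk P p (false :: l))
  | 1 :: p, l, v => bad2 (true :: l) || ext (true :: l) v (chk P p (true :: l))
  | _ :: p, l, v => (bad2 (false :: l) || ext (false :: l) v (chk P p (false :: l))) &&
      (bad2 (true :: l) || ext (true :: l) v (chk P p (true :: l)))

/-- The pattern matches the configuration to the left of `e`. -/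
def MT (y : ℤ → Bool) : ℤ → List ℕ → Prop
  | _, [] => True
  | e, 0 :: p => y (e-1) = false ∧ MT y (e-1) p
  | e, 1 :: p => y (e-1) = true ∧ MT y (e-1) p
  | e, _ :: p => MT y (e-1) p

theorem chk_sound {y : ℤ → Bool} (h : NF2 y) (h' : NF2 (stp y))
    (P : List Bool → List Bool → Bool) (p : List ℕ) :
    ∀ (e : ℤ) (k : ℕ), chk P p (wl y e k) (wl (stp y) (e+4) (k-8)) = true → MT y e p →
      P (wl y (e - p.length) (k + p.length))
        (wl (stp y) (e - p.length + 4) (k + p.length - 8)) = true := by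
  induction p with
  | nil => intro e k h1 _; simpa [chk] using h1
  | cons o p ih =>
    intro e k h1 h2
    have hb := bad2_wl h (e-1) (k+1)
    have hw : wl y (e-1) (k+1) = y (e-1) :: wl y e k := by simp [wl]
    have h3 : ext (wl y (e-1) (k+1)) (wl (stp y) (e-1+5) (k-8)) (chk P p (wl y (e-1) (k+1))) = true
        ∧ MT y (e-1) p := by
      have e5 : e - 1 + 5 = e + 4 := by ring
      rw [hw] at hb ⊢
      rw [e5]
      match o, h1, h2 with
      | 0, h1, h2 =>
        rw [h2.1] at hb ⊢
        simp only [chk, hb, Bool.false_or] at h1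
        exact ⟨h1, h2.2⟩
      | 1, h1, h2 =>
        rw [h2.1] at hb ⊢
        simp only [chk, hb, Bool.false_or] at h1
        exact ⟨h1, h2.2⟩
      | o+2, h1, h2 =>
        refine ⟨?_, h2⟩
        simp only [chk, Bool.and_eq_true] at h1
        cases hy : y (e-1)
        · rw [hy] at hb
          simp only [hb, Bool.false_or] at h1
          exact h1.1
        · rw [hy] at hb
          simp only [hb, Bool.false_or] at h1
          exact h1.2
    have := ih (e-1) (k+1) (ext_wl h' _ _ _ h3.1) h3.2
    have a1 : e - ((o :: p).length : ℤ) = e - 1 - p.length := by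
      simp only [List.length_cons]; push_cast; ring
    have a2 : k + (o :: p).length = k + 1 + p.length := by
      simp only [List.length_cons]; ring
    rw [a1, a2]
    exact this

/-- The Boolean test on a window. -/
def tst (C : (ℕ → Bool) → (ℕ → Bool) → Bool) (l v : List Bool) : Bool :=
  C (fun k => l.getD k false) (fun k => v.getD (k - 4) false)

theorem win (lo : ℤ) (m : ℕ) (e : ℤ) (p : List ℕ) (C : (ℕ → Bool) → (ℕ → Bool) → Bool)
    (hc : chk (tst C) p.reverse [] [] = true) (hl : p.length = m + 8) (he : e = lo + m + 8)
    {y : ℤ → Bool} (h : NF2 y) (h' : NF2 (stp y)) (hm : MT y e p.reverse) :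
    C (fun k => (wl y lo (m+8)).getD k false)
      (fun k => (wl (stp y) (lo+4) m).getD (k - 4) false) = true := by
  have := chk_sound h h' _ p.reverse e 0 hc hm
  have e1 : e - (p.reverse.length : ℤ) = lo := by
    simp [hl]; omega
  rw [e1] at this
  simpa only [List.length_reverse, hl, zero_add, tst, Nat.add_sub_cancel] using this

/-- A left-moving front (box). -/
def LF (y : ℤ → Bool) (k : ℤ) : Bool :=
  y (k-1) && !y k && y (k+1) && !y (k+2) && !y (k+3)

/-- A front in a window. -/
def frN (u : ℕ → Bool) (k : ℕ) : Bool := frb (u (k-3)) (u (k-2)) (u (k-1)) (u k) (u (k+1))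

/-- A left-moving front in a window. -/
def LFN (u : ℕ → Bool) (k : ℕ) : Bool := u (k-1) && !u k && u (k+1) && !u (k+2) && !u (k+3)

/-- Right front, at least four zeros. -/
theorem BL1 {Y : ℤ → Bool} (h : NF2 Y) (h' : NF2 (stp Y))
    (_ : Y (-1) = true) (_ : Y 0 = false) (_ : Y 1 = false) (_ : Y 2 = false) (_ : Y 3 = false) :
    (!fr Y 0 || fr (stp Y) 2) = true := by
  have := win (-5) 5 8 [2, 2, 2, 2, 1, 0, 0, 0, 0, 2, 2, 2, 2]
    (fun u v => !frN u 5 || frN v 7)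
    (by decide +kernel) rfl (by norm_num) h h' (by simp [MT, *])
  exact this

/-- Right front, two zeros, then a single one: impossible. -/
theorem BL2 {Y : ℤ → Bool} (h : NF2 Y) (h' : NF2 (stp Y))
    (_ : Y (-1) = true) (_ : Y 0 = false) (_ : Y 1 = false) (_ : Y 2 = true) (_ : Y 3 = false) :
    (!(fr Y 0 && fr Y 3)) = true := by
  have := win (-3) 6 11 [2, 2, 1, 0, 0, 1, 0, 2, 2, 2, 2, 2, 2, 2]
    (fun u v => !(frN u 3 && frN u 6))
    (by decide +kernel) rfl (by norm_num) h h' (by simp [MT, *])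
  exact this

/-- Right front, two zeros, then three ones: impossible. -/
theorem BL3 {Y : ℤ → Bool} (h : NF2 Y) (h' : NF2 (stp Y))
    (_ : Y (-1) = true) (_ : Y 0 = false) (_ : Y 1 = false) (_ : Y 2 = true) (_ : Y 3 = true) (_ : Y 4 = true) :
    (!fr Y 0) = true := by
  have := win (-3) 0 5 [2, 2, 1, 0, 0, 1, 1, 1]
    (fun u v => !frN u 3)
    (by decide +kernel) rfl (by norm_num) h h' (by simp [MT, *])
  exact this

/-- Left front, at least four cells from the wall. -/
theorem BL4 {Y : ℤ → Bool} (h : NF2 Y) (h' : NF2 (stp Y))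
    (_ : Y (-1) = true) (_ : Y 0 = false) (_ : Y 1 = true) (_ : Y 2 = false) (_ : Y 3 = false) :
    ((LF (stp Y) (-2) && !stp Y 2 && !stp Y 3) || (fr (stp Y) 0 && !stp Y 0 && !stp Y 1 && !stp Y 2 && !stp Y 3) || (fr (stp Y) 2 && !stp Y 2 && !stp Y 3)) = true := by
  have := win (-7) 7 8 [2, 2, 2, 2, 2, 2, 1, 0, 1, 0, 0, 2, 2, 2, 2]
    (fun u v => (LFN v 5 && !v 9 && !v 10) || (frN v 7 && !v 7 && !v 8 && !v 9 && !v 10) || (frN v 9 && !v 9 && !v 10))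
    (by decide +kernel) rfl (by norm_num) h h' (by simp [MT, *])
  exact this

/-- Right end of a state with a single one. -/
theorem BR1a {Y : ℤ → Bool} (h : NF2 Y) (h' : NF2 (stp Y))
    (_ : Y (-5) = false) (_ : Y (-4) = false) (_ : Y (-3) = false) (_ : Y (-2) = false) (_ : Y (-1) = true) (_ : Y 0 = false) :
    (!fr Y 0 || (fr (stp Y) 0 && stp Y (-1)) || (fr (stp Y) 2 && stp Y (-1) && stp Y 0 && stp Y 1)) = true := by
  have := win (-7) 7 8 [2, 2, 0, 0, 0, 0, 1, 0, 2, 2, 2, 2, 2, 2, 2]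
    (fun u v => !frN u 7 || (frN v 7 && v 6) || (frN v 9 && v 6 && v 7 && v 8))
    (by decide +kernel) rfl (by norm_num) h h' (by simp [MT, *])
  exact this

/-- Right end of a state with three ones. -/
theorem BR3a {Y : ℤ → Bool} (h : NF2 Y) (h' : NF2 (stp Y))
    (_ : Y (-7) = false) (_ : Y (-6) = false) (_ : Y (-5) = false) (_ : Y (-4) = false) (_ : Y (-3) = true) (_ : Y (-2) = true) (_ : Y (-1) = true) (_ : Y 0 = false) :
    (!fr Y 0 || (fr (stp Y) (-2) && stp Y (-3)) || (fr (stp Y) 0 && stp Y (-3) && stp Y (-2) && stp Y (-1)) || (fr (stp Y) 2 && stp Y (-3) && stp Y (-2) && stp Y (-1) && stp Y 0 && stp Y 1)) = true := by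
  have := win (-9) 9 8 [2, 2, 0, 0, 0, 0, 1, 1, 1, 0, 2, 2, 2, 2, 2, 2, 2]
    (fun u v => !frN u 9 || (frN v 7 && v 6) || (frN v 9 && v 6 && v 7 && v 8) || (frN v 11 && v 6 && v 7 && v 8 && v 9 && v 10))
    (by decide +kernel) rfl (by norm_num) h h' (by simp [MT, *])
  exact this

/-- Right end of a state with a single one. -/
theorem BR1b {Y : ℤ → Bool} (h : NF2 Y) (h' : NF2 (stp Y))
    (_ : Y (-6) = true) (_ : Y (-5) = false) (_ : Y (-4) = true) (_ : Y (-3) = false) (_ : Y (-2) = false) (_ : Y (-1) = true) (_ : Y 0 = false) :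
    (!fr Y 0 || (fr (stp Y) 0 && stp Y (-1)) || (fr (stp Y) 2 && stp Y (-1) && stp Y 0 && stp Y 1)) = true := by
  have := win (-7) 7 8 [2, 1, 0, 1, 0, 0, 1, 0, 2, 2, 2, 2, 2, 2, 2]
    (fun u v => !frN u 7 || (frN v 7 && v 6) || (frN v 9 && v 6 && v 7 && v 8))
    (by decide +kernel) rfl (by norm_num) h h' (by simp [MT, *])
  exact this

/-- Right end of a state with three ones. -/
theorem BR3b {Y : ℤ → Bool} (h : NF2 Y) (h' : NF2 (stp Y))
    (_ : Y (-8) = true) (_ : Y (-7) = false) (_ : Y (-6) = true) (_ : Y (-5) = false) (_ : Y (-4) = false) (_ : Y (-3) = true) (_ : Y (-2) = true) (_ : Y (-1) = true) (_ : Y 0 = false) :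
    (!fr Y 0 || (fr (stp Y) (-2) && stp Y (-3)) || (fr (stp Y) 0 && stp Y (-3) && stp Y (-2) && stp Y (-1)) || (fr (stp Y) 2 && stp Y (-3) && stp Y (-2) && stp Y (-1) && stp Y 0 && stp Y 1)) = true := by
  have := win (-9) 9 8 [2, 1, 0, 1, 0, 0, 1, 1, 1, 0, 2, 2, 2, 2, 2, 2, 2]
    (fun u v => !frN u 9 || (frN v 7 && v 6) || (frN v 9 && v 6 && v 7 && v 8) || (frN v 11 && v 6 && v 7 && v 8 && v 9 && v 10))
    (by decide +kernel) rfl (by norm_num) h h' (by simp [MT, *])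
  exact this

/-- Right end of a state with at least five ones. -/
theorem BR5 {Y : ℤ → Bool} (h : NF2 Y) (h' : NF2 (stp Y))
    (_ : Y (-5) = true) (_ : Y (-4) = true) (_ : Y (-3) = true) (_ : Y (-2) = true) (_ : Y (-1) = true) (_ : Y 0 = false) :
    (!fr Y 0 || (fr (stp Y) (-2) && stp Y (-4) && stp Y (-3)) || (fr (stp Y) 0 && stp Y (-4) && stp Y (-3) && stp Y (-2) && stp Y (-1)) || (fr (stp Y) 2 && stp Y (-4) && stp Y (-3) && stp Y (-2) && stp Y (-1) && stp Y 0 && stp Y 1)) = true := by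
  have := win (-9) 9 8 [2, 2, 2, 2, 1, 1, 1, 1, 1, 0, 2, 2, 2, 2, 2, 2, 2]
    (fun u v => !frN u 9 || (frN v 7 && v 5 && v 6) || (frN v 9 && v 5 && v 6 && v 7 && v 8) || (frN v 11 && v 5 && v 6 && v 7 && v 8 && v 9 && v 10))
    (by decide +kernel) rfl (by norm_num) h h' (by simp [MT, *])
  exact this

/-- A wall stays. -/
theorem BWa {Y : ℤ → Bool} (h : NF2 Y) (h' : NF2 (stp Y))
    (_ : Y (-3) = false) (_ : Y (-2) = false) (_ : Y (-1) = false) (_ : Y 0 = true) (_ : Y 1 = true) (_ : Y 2 = true) :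
    (stp Y 0) = true := by
  have := win (-4) 1 5 [2, 0, 0, 0, 1, 1, 1, 2, 2]
    (fun u v => v 4)
    (by decide +kernel) rfl (by norm_num) h h' (by simp [MT, *])
  exact this

/-- A wall stays. -/
theorem BWb {Y : ℤ → Bool} (h : NF2 Y) (h' : NF2 (stp Y))
    (_ : Y (-5) = true) (_ : Y (-4) = false) (_ : Y (-3) = true) (_ : Y (-2) = false) (_ : Y (-1) = false) (_ : Y 0 = true) (_ : Y 1 = true) (_ : Y 2 = true) :
    (stp Y 0) = true := by
  have := win (-5) 2 5 [1, 0, 1, 0, 0, 1, 1, 1, 2, 2]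
    (fun u v => v 5)
    (by decide +kernel) rfl (by norm_num) h h' (by simp [MT, *])
  exact this

/-- Right front, at least three zeros. -/
theorem AL1 {Y : ℤ → Bool} (h : NF2 Y) (h' : NF2 (stp Y))
    (_ : Y (-1) = true) (_ : Y 0 = false) (_ : Y 1 = false) (_ : Y 2 = false) :
    (!fr Y 0 || ((fr (stp Y) (-2) && !stp Y (-2) && !stp Y (-1) && !stp Y 0 && !stp Y 1) || (LF (stp Y) (-2) && !stp Y 0 && !stp Y 1)) || (fr (stp Y) 0 && !stp Y 0 && !stp Y 1) || (fr (stp Y) 2 && !stp Y 2)) = true := by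
  have := win (-9) 9 8 [2, 2, 2, 2, 2, 2, 2, 2, 1, 0, 0, 0, 2, 2, 2, 2, 2]
    (fun u v => !frN u 9 || ((frN v 7 && !v 7 && !v 8 && !v 9 && !v 10) || (LFN v 7 && !v 9 && !v 10)) || (frN v 9 && !v 9 && !v 10) || (frN v 11 && !v 11))
    (by decide +kernel) rfl (by norm_num) h h' (by simp [MT, *])
  exact this

/-- Left front, at least five cells from the wall. -/
theorem AL2 {Y : ℤ → Bool} (h : NF2 Y) (h' : NF2 (stp Y))
    (_ : Y (-1) = true) (_ : Y 0 = false) (_ : Y 1 = true) (_ : Y 2 = false) (_ : Y 3 = false) (_ : Y 4 = false) :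
    (((fr (stp Y) (-2) && !stp Y (-2) && !stp Y (-1) && !stp Y 0 && !stp Y 1 && !stp Y 2 && !stp Y 3) || (LF (stp Y) (-2) && !stp Y 0 && !stp Y 1 && !stp Y 2 && !stp Y 3)) || ((fr (stp Y) 0 && !stp Y 0 && !stp Y 1 && !stp Y 2 && !stp Y 3) || (LF (stp Y) 0 && !stp Y 2 && !stp Y 3)) || (fr (stp Y) 2 && !stp Y 2 && !stp Y 3)) = true := by
  have := win (-9) 9 8 [2, 2, 2, 2, 2, 2, 2, 2, 1, 0, 1, 0, 0, 0, 2, 2, 2]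
    (fun u v => ((frN v 7 && !v 7 && !v 8 && !v 9 && !v 10 && !v 11 && !v 12) || (LFN v 7 && !v 9 && !v 10 && !v 11 && !v 12)) || ((frN v 9 && !v 9 && !v 10 && !v 11 && !v 12) || (LFN v 9 && !v 11 && !v 12)) || (frN v 11 && !v 11 && !v 12))
    (by decide +kernel) rfl (by norm_num) h h' (by simp [MT, *])
  exact this

/-- A single zero before a wall. -/
theorem AW2 {Y : ℤ → Bool} (h : NF2 Y) (h' : NF2 (stp Y))
    (_ : Y (-2) = true) (_ : Y (-1) = false) (_ : Y 0 = true) (_ : Y 1 = true) (_ : Y 2 = true) (_ : Y 3 = true) :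
    ((fr (stp Y) (-1) && stp Y 0) || (!stp Y 0 && !stp Y (-1) && (LF (stp Y) (-3) || fr (stp Y) (-1)))) = true := by
  have := win (-8) 5 5 [2, 2, 2, 2, 2, 2, 1, 0, 1, 1, 1, 1, 2]
    (fun u v => (frN v 7 && v 8) || (!v 8 && !v 7 && (LFN v 5 || frN v 7)))
    (by decide +kernel) rfl (by norm_num) h h' (by simp [MT, *])
  exact this

/-- Two ones: the next front is a box. -/
theorem AO1 {Y : ℤ → Bool} (h : NF2 Y) (h' : NF2 (stp Y))
    (_ : Y (-1) = false) (_ : Y 0 = true) (_ : Y 1 = true) (_ : Y 2 = false) :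
    (!fr Y 2 || LF Y 2) = true := by
  have := win (-1) 0 7 [0, 1, 1, 0, 2, 2, 2, 2]
    (fun u v => !frN u 3 || LFN u 3)
    (by decide +kernel) rfl (by norm_num) h h' (by simp [MT, *])
  exact this

/-- Two ones before a box. -/
theorem AO2 {Y : ℤ → Bool} (h : NF2 Y) (h' : NF2 (stp Y))
    (_ : Y (-1) = false) (_ : Y 0 = true) (_ : Y 1 = true) (_ : Y 2 = false) (_ : Y 3 = true) (_ : Y 4 = false) (_ : Y 5 = false) :
    (!stp Y 0 && !stp Y 1 && !stp Y 2 && stp Y 3 && fr (stp Y) 4) = true := by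
  have := win (-4) 6 10 [2, 2, 2, 0, 1, 1, 0, 1, 0, 0, 2, 2, 2, 2]
    (fun u v => !v 4 && !v 5 && !v 6 && v 7 && frN v 8)
    (by decide +kernel) rfl (by norm_num) h h' (by simp [MT, *])
  exact this

/-- Two ones before a box, after a single zero. -/
theorem AO3 {Y : ℤ → Bool} (h : NF2 Y) (h' : NF2 (stp Y))
    (_ : Y (-2) = true) (_ : Y (-1) = false) (_ : Y 0 = true) (_ : Y 1 = true) (_ : Y 2 = false) (_ : Y 3 = true) (_ : Y 4 = false) (_ : Y 5 = false) :
    (((fr (stp Y) (-1) && !stp Y (-1) && !stp Y 0 && !stp Y 1) || (LF (stp Y) (-1) && !stp Y 1)) || ((fr (stp Y) (-3) && !stp Y (-3) && !stp Y (-2) && !stp Y (-1) && !stp Y 0 && !stp Y 1) || (LF (stp Y) (-3) && !stp Y (-1) && !stp Y 0 && !stp Y 1)) || ((fr (stp Y) (-5) && !stp Y (-5) && !stp Y (-4) && !stp Y (-3) && !stp Y (-2) && !stp Y (-1) && !stp Y 0 && !stp Y 1) || (LF (stp Y) (-5) && !stp Y (-3) && !stp Y (-2) && !stp Y (-1) &&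 !stp Y 0 && !stp Y 1)) || ((fr (stp Y) (-7) && !stp Y (-7) && !stp Y (-6) && !stp Y (-5) && !stp Y (-4) && !stp Y (-3) && !stp Y (-2) && !stp Y (-1) && !stp Y 0 && !stp Y 1) || (LF (stp Y) (-7) && !stp Y (-5) && !stp Y (-4) && !stp Y (-3) && !stp Y (-2) && !stp Y (-1) && !stp Y 0 && !stp Y 1))) = true := by
  have := win (-14) 13 7 [2, 2, 2, 2, 2, 2, 2, 2, 2, 2, 2, 2, 1, 0, 1, 1, 0, 1, 0, 0, 2]
    (fun u v => ((frN v 13 && !v 13 && !v 14 && !v 15) || (LFN v 13 && !v 15)) || ((frN v 11 && !v 11 && !v 12 && !v 13 && !v 14 && !v 15) || (LFN v 11 && !v 13 && !v 14 && !v 15)) || ((frN v 9 && !v 9 && !v 10 && !v 11 && !v 12 && !v 13 && !v 14 && !v 15) || (LFN v 9 && !v 11 && !v 12 && !v 13 && !v 14 && !v 15)) || ((frN v 7 && !v 7 && !v 8 && !v 9 && !v 10 && !v 11 && !v 12 && !v 13 && !v 14 && !v 15) || (LFN v 7 && !v 9 && !v 10 && !v 11 && !v 12 && !v 13 && !v 14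 && !v 15)))
    (by decide +kernel) rfl (by norm_num) h h' (by simp [MT, *])
  exact this

/-- Right end of a state with at least four ones. -/
theorem AR {Y : ℤ → Bool} (h : NF2 Y) (h' : NF2 (stp Y))
    (_ : Y (-4) = true) (_ : Y (-3) = true) (_ : Y (-2) = true) (_ : Y (-1) = true) (_ : Y 0 = false) :
    (!fr Y 0 || cond (LF Y 0) (LF (stp Y) (-2) && stp Y (-3)) ((fr (stp Y) 2 && stp Y (-3) && stp Y (-2) && stp Y (-1) && stp Y 0 && stp Y 1) || (LF (stp Y) (-2) && stp Y (-3)) || (LF (stp Y) 0 && stp Y (-3) && stp Y (-2) && stp Y (-1)) || (stp Y (-3) && !stp Y (-2) && !stp Y (-1) && !stp Y 0 && !stp Y 1 && !stp Y 2 && !stp Y 3 && stp Y 4 && fr (stp Y) 5))) = true := by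
  have := win (-7) 10 11 [2, 2, 2, 1, 1, 1, 1, 0, 2, 2, 2, 2, 2, 2, 2, 2, 2, 2]
    (fun u v => !frN u 7 || cond (LFN u 7) (LFN v 5 && v 4) ((frN v 9 && v 4 && v 5 && v 6 && v 7 && v 8) || (LFN v 5 && v 4) || (LFN v 7 && v 4 && v 5 && v 6) || (v 4 && !v 5 && !v 6 && !v 7 && !v 8 && !v 9 && !v 10 && v 11 && frN v 12)))
    (by decide +kernel) rfl (by norm_num) h h' (by simp [MT, *])
  exact this

/-- Translation. -/
def sh (y : ℤ → Bool) (c k : ℤ) : Bool := y (c + k)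

theorem stp_sh (y : ℤ → Bool) (c : ℤ) : stp (sh y c) = sh (stp y) c := by
  funext k
  simp only [stp, sh]
  ring_nf

theorem fr_sh (y : ℤ → Bool) (c k : ℤ) : fr (sh y c) k = fr y (c + k) := by
  simp only [fr, sh]
  ring_nf

theorem LF_sh (y : ℤ → Bool) (c k : ℤ) : LF (sh y c) k = LF y (c + k) := by
  simp only [LF, sh]
  ring_nf

theorem NF2_sh {y : ℤ → Bool} (h : NF2 y) (c : ℤ) : NF2 (sh y c) := by
  intro i
  have := h (c + i)
  simp only [sh]
  ring_nf at this ⊢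
  exact this

theorem NF2_sh' {y : ℤ → Bool} (h : NF2 (stp y)) (c : ℤ) : NF2 (stp (sh y c)) := by
  rw [stp_sh]; exact NF2_sh h c

theorem fr_spec {y : ℤ → Bool} {f : ℤ} (h : fr y f = true) : y (f-1) = true ∧ y f = false := by
  unfold fr frb at h
  simp at h
  tauto

theorem LF_spec {y : ℤ → Bool} {f : ℤ} (h : LF y f = true) : y (f-1) = true ∧ y f = false ∧
    y (f+1) = true ∧ y (f+2) = false ∧ y (f+3) = false := by
  unfold LF at h
  simp at h
  tauto

theorem fr_of_LF {y : ℤ → Bool} {f : ℤ} (h : LF y f = true) : fr y f = true := by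
  have := LF_spec h
  simp [fr, frb, this]

theorem loc_zero3 : ∀ a b c d e f : Bool, loc9 a b false false false c d e f = false := by decide

theorem loc_one4 : ∀ a b c d e : Bool, loc9 a b c true true true true d e = true := by decide

theorem zero3 {y : ℤ → Bool} {j : ℤ} (h2 : y (j-2) = false) (h1 : y (j-1) = false)
    (h0 : y j = false) : stp y j = false := by
  unfold stp
  rw [h2, h1, h0]
  exact loc_zero3 _ _ _ _ _ _

theorem one4 {y : ℤ → Bool} {j : ℤ} (h1 : y (j-1) = true) (h0 : y j = true)
    (h2 : y (j+1) = true) (h3 : y (j+2) = true) : stp y j = true := by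
  unfold stp
  rw [h1, h0, h2, h3]
  exact loc_one4 _ _ _ _ _

/-- Zeros on `[a, b)`. -/
def Zer (y : ℤ → Bool) (a b : ℤ) : Prop := ∀ j, a ≤ j → j < b → y j = false

/-- Ones on `[a, b)`. -/
def Ons (y : ℤ → Bool) (a b : ℤ) : Prop := ∀ j, a ≤ j → j < b → y j = true

theorem Zer.step {y : ℤ → Bool} {a b : ℤ} (h : Zer y a b) : Zer (stp y) (a+2) b := fun j h1 h2 =>
  zero3 (h _ (by omega) (by omega)) (h _ (by omega) (by omega)) (h _ (by omega) (by omega))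

theorem Ons.step {y : ℤ → Bool} {a b : ℤ} (h : Ons y a b) : Ons (stp y) (a+1) (b-2) := fun j h1 h2 =>
  one4 (h _ (by omega) (by omega)) (h _ (by omega) (by omega)) (h _ (by omega) (by omega))
    (h _ (by omega) (by omega))

theorem Zer.cons {y : ℤ → Bool} {a b a' : ℤ} (h : Zer y a' b) (h0 : y a = false) (e : a' = a + 1) :
    Zer y a b := by
  intro j h1 h2
  by_cases hj : j = a
  · rw [hj]; exact h0
  · exact h j (by omega) h2

theorem Ons.cons {y : ℤ → Bool} {a b a' : ℤ} (h : Ons y a' b) (h0 : y a = true) (e : a' = a + 1) :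
    Ons y a b := by
  intro j h1 h2
  by_cases hj : j = a
  · rw [hj]; exact h0
  · exact h j (by omega) h2

theorem Zer.snoc {y : ℤ → Bool} {a b b' c : ℤ} (h : Zer y a b) (h0 : y c = false) (e : c = b)
    (e' : b' = b + 1) : Zer y a b' := by
  intro j h1 h2
  by_cases hj : j = c
  · rw [hj]; exact h0
  · exact h j h1 (by omega)

theorem Ons.snoc {y : ℤ → Bool} {a b b' c : ℤ} (h : Ons y a b) (h0 : y c = true) (e : c = b)
    (e' : b' = b + 1) : Ons y a b' := by
  intro j h1 h2
  by_cases hj : j = c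
  · rw [hj]; exact h0
  · exact h j h1 (by omega)

theorem Zer.nil {y : ℤ → Bool} {a b : ℤ} (h : b ≤ a) : Zer y a b := fun j h1 h2 => by omega

theorem Ons.nil {y : ℤ → Bool} {a b : ℤ} (h : b ≤ a) : Ons y a b := fun j h1 h2 => by omega

/-- Left part of a state. -/
def Lef (y : ℤ → Bool) (f w : ℤ) : Prop :=
  (fr y f = true ∧ f < w ∧ Zer y f w) ∨ (LF y f = true ∧ f + 4 ≤ w ∧ Zer y (f+2) w)

/-- Right part of a state. -/
def Rig (y : ℤ → Bool) (w g : ℤ) : Prop := w < g ∧ Ons y w g ∧ fr y g = true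

theorem beta_right {y : ℤ → Bool} (h : NF2 y) (h' : NF2 (stp y)) {w g : ℤ} (hr : Rig y w g)
    (ho : (g - w) % 2 = 1)
    (hc : Zer y (w-4) w ∨ (y (w-5) = true ∧ y (w-4) = false ∧ y (w-3) = true ∧ Zer y (w-2) w)) :
    ∃ g', Rig (stp y) w g' ∧ (g' - w) % 2 = 1 := by
  obtain ⟨hwg, h1, hf⟩ := hr
  have hg := fr_spec hf
  have H := NF2_sh h g
  have H' := NF2_sh' h' g
  have K := NF2_sh h w
  have K' := NF2_sh' h' w
  have st := h1.step
  have fg : fr (sh y g) 0 = true := by rw [fr_sh, add_zero]; exact hf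
  have g0 : sh y g 0 = false := by unfold sh; rw [add_zero]; exact hg.2
  rcases (by omega : g = w + 1 ∨ g = w + 3 ∨ w + 5 ≤ g) with e | e | e
  · have key : (fr (stp y) g = true ∧ stp y w = true) ∨
        (fr (stp y) (g+2) = true ∧ stp y w = true ∧ stp y (w+1) = true ∧ stp y (w+2) = true) := by
      subst e
      rcases hc with hc | ⟨c1, c2, c3, hc⟩
      · have := BR1a H H' (hc _ (by omega) (by omega)) (hc _ (by omega) (by omega))
          (hc _ (by omega) (by omega)) (hc _ (by omega) (by omega)) (h1 _ (by omega) (by omega)) g0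
        simp [fg, stp_sh, fr_sh] at this
        simp [sh] at this
        ring_nf at this ⊢
        tauto
      · have := BR1b H H' (by unfold sh; ring_nf at c1 ⊢; exact c1)
          (by unfold sh; ring_nf at c2 ⊢; exact c2) (by unfold sh; ring_nf at c3 ⊢; exact c3)
          (hc _ (by omega) (by omega)) (hc _ (by omega) (by omega)) (h1 _ (by omega) (by omega)) g0
        simp [fg, stp_sh, fr_sh] at this
        simp [sh] at this
        ring_nf at this ⊢
        tauto
    rcases key with ⟨k1, k2⟩ | ⟨k1, k2, k3, k4⟩
    · exact ⟨g, ⟨hwg, (Ons.nil le_rfl).snoc k2 rfl (by omega), k1⟩, ho⟩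
    · exact ⟨g+2, ⟨by omega, (((Ons.nil le_rfl).snoc k2 rfl rfl).snoc k3 rfl rfl).snoc k4 (by omega) (by omega), k1⟩, by omega⟩
  · have key : (fr (stp y) (g + -2) = true ∧ stp y w = true) ∨
        (fr (stp y) g = true ∧ stp y w = true ∧ stp y (w+1) = true ∧ stp y (w+2) = true) ∨
        (fr (stp y) (g+2) = true ∧ stp y w = true ∧ stp y (w+1) = true ∧ stp y (w+2) = true ∧
          stp y (w+3) = true ∧ stp y (w+4) = true) := by
      subst e
      rcases hc with hc | ⟨c1, c2, c3, hc⟩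
      · have := BR3a H H' (hc _ (by omega) (by omega)) (hc _ (by omega) (by omega))
          (hc _ (by omega) (by omega)) (hc _ (by omega) (by omega)) (h1 _ (by omega) (by omega))
          (h1 _ (by omega) (by omega)) (h1 _ (by omega) (by omega)) g0
        simp [fg, stp_sh, fr_sh] at this
        simp [sh] at this
        ring_nf at this ⊢
        tauto
      · have := BR3b H H' (by unfold sh; ring_nf at c1 ⊢; exact c1)
          (by unfold sh; ring_nf at c2 ⊢; exact c2) (by unfold sh; ring_nf at c3 ⊢; exact c3)
          (hc _ (by omega) (by omega)) (hc _ (by omega) (by omega)) (h1 _ (by omega) (by omega))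
          (h1 _ (by omega) (by omega)) (h1 _ (by omega) (by omega)) g0
        simp [fg, stp_sh, fr_sh] at this
        simp [sh] at this
        ring_nf at this ⊢
        tauto
    rcases key with ⟨k1, k2⟩ | ⟨k1, k2, k3, k4⟩ | ⟨k1, k2, k3, k4, k5, k6⟩
    · exact ⟨g + -2, ⟨by omega, (Ons.nil le_rfl).snoc k2 rfl (by omega), k1⟩, by omega⟩
    · exact ⟨g, ⟨by omega, (((Ons.nil le_rfl).snoc k2 rfl rfl).snoc k3 rfl rfl).snoc k4
        (by omega) (by omega), k1⟩, by omega⟩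
    · exact ⟨g+2, ⟨by omega, (((((Ons.nil le_rfl).snoc k2 rfl rfl).snoc k3 rfl rfl).snoc k4
        (by omega) rfl).snoc k5 (by omega) rfl).snoc k6 (by omega) (by omega), k1⟩, by omega⟩
  · have wall : stp y w = true := by
      rcases hc with hc | ⟨c1, c2, c3, hc⟩
      · have := BWa K K' (hc _ (by omega) (by omega)) (hc _ (by omega) (by omega))
          (hc _ (by omega) (by omega)) (h1 _ (by omega) (by omega)) (h1 _ (by omega) (by omega))
          (h1 _ (by omega) (by omega))
        simpa [stp_sh, sh] using this
      · have := BWb K K' c1 c2 c3 (hc _ (by omega) (by omega)) (hc _ (by omega) (by omega))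
          (h1 _ (by omega) (by omega)) (h1 _ (by omega) (by omega)) (h1 _ (by omega) (by omega))
        simpa [stp_sh, sh] using this
    have st2 : Ons (stp y) w (g-2) := st.cons wall rfl
    have := BR5 H H' (h1 _ (by omega) (by omega)) (h1 _ (by omega) (by omega))
      (h1 _ (by omega) (by omega)) (h1 _ (by omega) (by omega)) (h1 _ (by omega) (by omega)) g0
    simp [fg, stp_sh, fr_sh] at this
    simp [sh] at this
    rcases this with (⟨⟨k1, k2⟩, k3⟩ | ⟨⟨⟨⟨k1, k2⟩, k3⟩, k4⟩, k5⟩) | ⟨⟨⟨⟨⟨⟨k1, k2⟩, k3⟩, k4⟩, k5⟩, k6⟩, k7⟩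
    · exact ⟨g + -2, ⟨by omega, st2, k1⟩, by omega⟩
    · exact ⟨g, ⟨by omega, (st2.snoc k4 (by omega) rfl).snoc k5 (by omega) (by omega), k1⟩, by omega⟩
    · exact ⟨g+2, ⟨by omega, (((st2.snoc k4 (by omega) rfl).snoc k5 (by omega) rfl).snoc k6
        (by omega) rfl).snoc k7 (by omega) (by omega), k1⟩, by omega⟩

/-- Context on the left of the wall. -/
theorem ctx_of {y : ℤ → Bool} {f w : ℤ} (hl : Lef y f w) (hz : (w - f) % 2 = 0)
    (h2 : fr y f = true ∧ Zer y f w → f + 4 ≤ w) :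
    Zer y (w-4) w ∨ (y (w-5) = true ∧ y (w-4) = false ∧ y (w-3) = true ∧ Zer y (w-2) w) := by
  rcases hl with ⟨a, b, c⟩ | ⟨a, b, c⟩
  · have := h2 ⟨a, c⟩
    exact Or.inl fun j h1 h2 => c j (by omega) h2
  · by_cases e : w = f + 4
    · subst e
      have := LF_spec a
      refine Or.inr ⟨?_, ?_, ?_, fun j h1 h2 => c j (by omega) h2⟩
      · rw [show f + 4 - 5 = f - 1 by ring]; exact this.1
      · rw [show f + 4 - 4 = f by ring]; exact this.2.1
      · rw [show f + 4 - 3 = f + 1 by ring]; exact this.2.2.1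
    · exact Or.inl fun j h1 h2 => c j (by omega) h2

/-- Two zeros behind a right front is impossible. -/
theorem beta_two {y : ℤ → Bool} (h : NF2 y) (h' : NF2 (stp y)) {f w g : ℤ} (hf : fr y f = true)
    (hz : Zer y f w) (hw : w = f + 2) (hr : Rig y w g) (ho : (g - w) % 2 = 1) : False := by
  obtain ⟨hwg, h1, hg⟩ := hr
  have H := NF2_sh h f
  have H' := NF2_sh' h' f
  have fs := fr_spec hf
  have gs := fr_spec hg
  subst hw
  rcases (by omega : g = f + 3 ∨ f + 5 ≤ g) with e | e
  · subst e
    have := BL2 H H' fs.1 (hz _ (by omega) (by omega)) (hz _ (by omega) (by omega))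
      (h1 _ (by omega) (by omega)) gs.2
    simp [fr_sh, hf, hg] at this
  · have := BL3 H H' fs.1 (hz _ (by omega) (by omega)) (hz _ (by omega) (by omega))
      (h1 _ (by omega) (by omega)) (h1 _ (by omega) (by omega)) (h1 _ (by omega) (by omega))
    simp [fr_sh, hf] at this

/-- Right fronts move right. -/
theorem beta_left_R {y : ℤ → Bool} (h : NF2 y) (h' : NF2 (stp y)) {f w : ℤ} (hf : fr y f = true)
    (hz : Zer y f w) (hw : f + 4 ≤ w) : fr (stp y) (f+2) = true ∧ Zer (stp y) (f+2) w := by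
  refine ⟨?_, hz.step⟩
  have := BL1 (NF2_sh h f) (NF2_sh' h' f) (fr_spec hf).1 (hz _ (by omega) (by omega))
    (hz _ (by omega) (by omega)) (hz _ (by omega) (by omega)) (hz _ (by omega) (by omega))
  simpa [fr_sh, stp_sh, hf] using this

/-- Left fronts. -/
theorem beta_left_L {y : ℤ → Bool} (h : NF2 y) (h' : NF2 (stp y)) {f w : ℤ} (hf : LF y f = true)
    (hz : Zer y (f+2) w) (hw : f + 4 ≤ w) : (LF (stp y) (f-2) = true ∧ Zer (stp y) f w) ∨
      ∃ f', f ≤ f' ∧ f' < w ∧ (f' - f) % 2 = 0 ∧ fr (stp y) f' = true ∧ Zer (stp y) f' w := by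
  have L := LF_spec hf
  have st : Zer (stp y) (f+4) w := fun j h1 h2 => hz.step j (by omega) h2
  have := BL4 (NF2_sh h f) (NF2_sh' h' f) L.1 (by simpa [sh] using L.2.1) L.2.2.1
    (hz _ (by omega) (by omega)) (hz _ (by omega) (by omega))
  simp [fr_sh, stp_sh, LF_sh] at this
  simp [sh] at this
  rcases this with (⟨⟨a, b⟩, c⟩ | ⟨⟨⟨⟨a, b⟩, c⟩, d⟩, e⟩) | ⟨⟨a, b⟩, c⟩
  · have L' := LF_spec a
    refine Or.inl ⟨a, ?_⟩
    have q0 : stp y f = false := by have := L'.2.2.2.1; ring_nf at this; exact this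
    have q1 : stp y (f+1) = false := by have := L'.2.2.2.2; ring_nf at this; ring_nf; exact this
    exact (((st.cons c (by omega)).cons b (by omega)).cons q1 (by omega)).cons q0 rfl
  · exact Or.inr ⟨f, le_rfl, by omega, by omega, a,
      (((st.cons e (by omega)).cons d (by omega)).cons c (by omega)).cons b rfl⟩
  · exact Or.inr ⟨f+2, by omega, by omega, by omega, a, (st.cons c (by omega)).cons b (by omega)⟩

theorem beta_R {n : ℕ} (hn : Odd n) : ∀ (N : ℕ) {y : ℤ → Bool}, Good n y → ∀ {f w g : ℤ},
    fr y f = true → Zer y f w → f < w → (w - f) % 2 = 0 → Rig y w g → (g - w) % 2 = 1 →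
    w - f ≤ N → False := by
  intro N
  induction N with
  | zero => intros; omega
  | succ N ih =>
    intro y hy f w g hf hz hfw hp hr ho hN
    have a := NF2_of_good hn hy
    have b := NF2_of_good hn hy.step
    by_cases e : w = f + 2
    · exact beta_two a b hf hz e hr ho
    · have hw : f + 4 ≤ w := by omega
      obtain ⟨c1, c2⟩ := beta_left_R a b hf hz hw
      obtain ⟨g', d1, d2⟩ := beta_right a b hr ho (Or.inl fun j h1 h2 => hz j (by omega) h2)
      exact ih hy.step c1 c2 (by omega) (by omega) d1 d2 (by push_cast at hN; omega)

theorem beta_L {n : ℕ} (hn : Odd n) : ∀ (N : ℕ) {y : ℤ → Bool}, Good n y → ∀ {f w g : ℤ},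
    LF y f = true → Zer y (f+2) w → f + 4 ≤ w → (w - f) % 2 = 0 → Rig y w g → (g - w) % 2 = 1 →
    n + 2 - (w - f) ≤ N → False := by
  intro N
  induction N with
  | zero =>
    intro y hy f w g hf hz hfw hp hr ho hN
    have a := hy.2 (f+1)
    have b := (LF_spec hf).2.2.1
    have hpos : 0 < n := hn.pos
    rw [b, hz (f+1+n) (by omega) (by push_cast at hN; omega)] at a
    simp at a
  | succ N ih =>
    intro y hy f w g hf hz hfw hp hr ho hN
    have a := NF2_of_good hn hy
    have b := NF2_of_good hn hy.step
    obtain ⟨g', d1, d2⟩ := beta_right a b hr ho (ctx_of (Or.inr ⟨hf, hfw, hz⟩) hp (fun _ => hfw))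
    rcases beta_left_L a b hf hz hfw with ⟨c1, c2⟩ | ⟨f', c1, c2, c3, c4, c5⟩
    · exact ih hy.step c1 (by rw [sub_add_cancel]; exact c2) (by omega) (by omega) d1 d2
        (by push_cast at hN; omega)
    · exact beta_R hn (w - f').toNat hy.step c4 c5 c2 (by omega) d1 d2 (by omega)

theorem beta {n : ℕ} (hn : Odd n) {y : ℤ → Bool} (hy : Good n y) {f w g : ℤ}
    (hl : Lef y f w) (hp : (w - f) % 2 = 0) (hr : Rig y w g) (ho : (g - w) % 2 = 1) : False := by
  rcases hl with ⟨a, b, c⟩ | ⟨a, b, c⟩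
  · exact beta_R hn (w - f).toNat hy a c b hp hr ho (by omega)
  · exact beta_L hn (n + 2 - (w - f)).toNat hy a c b hp hr ho (by omega)

theorem Zer.cast_eq {y : ℤ → Bool} {a b a' : ℤ} (h : Zer y a b) (e : a' = a) : Zer y a' b := e ▸ h

theorem Zer.to_eq {y : ℤ → Bool} {a b b' : ℤ} (h : Zer y a b) (e : b' = b) : Zer y a b' := e ▸ h

theorem Lef.ext {y : ℤ → Bool} {f w v : ℤ} (hl : Lef y f w) (hwv : w ≤ v) (hz : Zer y w v) :
    Lef y f v := by
  rcases hl with ⟨a, b, c⟩ | ⟨a, b, c⟩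
  · refine Or.inl ⟨a, by omega, fun j h1 h2 => ?_⟩
    by_cases hj : j < w
    · exact c j h1 hj
    · exact hz j (by omega) h2
  · refine Or.inr ⟨a, by omega, fun j h1 h2 => ?_⟩
    by_cases hj : j < w
    · exact c j h1 hj
    · exact hz j (by omega) h2

/-- Evolution of the left part when there are at least three zeros. -/
theorem alpha_left {y : ℤ → Bool} (h : NF2 y) (h' : NF2 (stp y)) {f w : ℤ} (hl : Lef y f w)
    (hp : (w - f) % 2 = 1) (hw : f + 3 ≤ w) :
    ∃ f', (w - f') % 2 = 1 ∧ Lef (stp y) f' w := by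
  have H := NF2_sh h f
  have H' := NF2_sh' h' f
  rcases hl with ⟨a, b, c⟩ | ⟨a, b, c⟩
  · have st := c.step
    have := AL1 H H' (fr_spec a).1 (c _ (by omega) (by omega)) (c _ (by omega) (by omega))
      (c _ (by omega) (by omega))
    simp [fr_sh, stp_sh, LF_sh, a] at this
    simp [sh] at this
    rcases this with ((⟨⟨⟨⟨a, b⟩, c⟩, d⟩, e⟩ | ⟨⟨a, b⟩, c⟩) | ⟨⟨a, b⟩, c⟩) | ⟨a, b⟩
    · exact ⟨f + -2, by omega, Or.inl ⟨a, by omega, (((st.cons e (by omega)).cons d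
        (by omega)).cons c (by omega)).cons b (by omega)⟩⟩
    · exact ⟨f + -2, by omega, Or.inr ⟨a, by omega, ((st.cons c (by omega)).cons b
        (by omega)).cast_eq (by omega)⟩⟩
    · exact ⟨f, by omega, Or.inl ⟨a, by omega, (st.cons c (by omega)).cons b (by omega)⟩⟩
    · exact ⟨f + 2, by omega, Or.inl ⟨a, by omega, st⟩⟩
  · have L := LF_spec a
    have st := c.step
    have := AL2 H H' L.1 (by simpa [sh] using L.2.1) L.2.2.1 (c _ (by omega) (by omega))
      (c _ (by omega) (by omega)) (c _ (by omega) (by omega))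
    simp [fr_sh, stp_sh, LF_sh] at this
    simp [sh] at this
    rcases this with ((⟨⟨⟨⟨⟨⟨a, b⟩, c⟩, d⟩, e⟩, p⟩, q⟩ | ⟨⟨⟨⟨a, b⟩, c⟩, d⟩, e⟩) |
      (⟨⟨⟨⟨a, b⟩, c⟩, d⟩, e⟩ | ⟨⟨a, b⟩, c⟩)) | ⟨⟨a, b⟩, c⟩
    · exact ⟨f + -2, by omega, Or.inl ⟨a, by omega, (((((st.cons q (by omega)).cons p
        (by omega)).cons e (by omega)).cons d (by omega)).cons c (by omega)).cons b (by omega)⟩⟩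
    · exact ⟨f + -2, by omega, Or.inr ⟨a, by omega, ((((st.cons e (by omega)).cons d
        (by omega)).cons c (by omega)).cons b (by omega)).cast_eq (by omega)⟩⟩
    · exact ⟨f, by omega, Or.inl ⟨a, by omega, (((st.cons e (by omega)).cons d (by omega)).cons c
        (by omega)).cons b (by omega)⟩⟩
    · exact ⟨f, by omega, Or.inr ⟨a, by omega, (st.cons c (by omega)).cons b (by omega)⟩⟩
    · exact ⟨f + 2, by omega, Or.inl ⟨a, by omega, (st.cons c (by omega)).cons b (by omega)⟩⟩

/-- Two ones on the right: the state becomes one of the second kind. -/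
theorem alpha_two {y : ℤ → Bool} (h : NF2 y) (h' : NF2 (stp y)) {f w g : ℤ} (hl : Lef y f w)
    (hp : (w - f) % 2 = 1) (hr : Rig y w g) (hg : g = w + 2) :
    ∃ f', (w + 3 - f') % 2 = 0 ∧ Lef (stp y) f' (w+3) ∧ Rig (stp y) (w+3) (w+4) := by
  have H := NF2_sh h w
  have H' := NF2_sh' h' w
  obtain ⟨-, h1, hf⟩ := hr
  subst hg
  have z1 : y (w + -1) = false := by
    rcases hl with ⟨a, b, c⟩ | ⟨a, b, c⟩ <;> exact c _ (by omega) (by omega)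
  have L : LF y (w+2) = true := by
    have := AO1 H H' z1 (h1 _ (by omega) (by omega)) (h1 _ (by omega) (by omega)) (fr_spec hf).2
    simpa [fr_sh, LF_sh, hf] using this
  have L' := LF_spec L
  have l3 : y (w + 3) = true := by have := L'.2.2.1; ring_nf at this; ring_nf; exact this
  have l4 : y (w + 4) = false := by have := L'.2.2.2.1; ring_nf at this; ring_nf; exact this
  have l5 : y (w + 5) = false := by have := L'.2.2.2.2; ring_nf at this; ring_nf; exact this
  have key := AO2 H H' z1 (h1 _ (by omega) (by omega)) (h1 _ (by omega) (by omega)) L'.2.1 l3 l4 l5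
  simp [fr_sh, stp_sh, LF_sh] at key
  simp [sh] at key
  obtain ⟨⟨⟨⟨k0, k1⟩, k2⟩, k3⟩, k4⟩ := key
  have R : Rig (stp y) (w+3) (w+4) :=
    ⟨by omega, (Ons.nil le_rfl).snoc k3 rfl (by omega), k4⟩
  have z : Zer (stp y) w (w+3) := (((Zer.nil le_rfl).snoc k0 rfl rfl).snoc k1 rfl rfl).snoc k2
    (by omega) (by omega)
  by_cases hw : f + 3 ≤ w
  · obtain ⟨f', a, b⟩ := alpha_left h h' hl hp hw
    exact ⟨f', by omega, b.ext (by omega) z, R⟩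
  · rcases hl with ⟨a, b, c⟩ | ⟨a, b, c⟩
    · have e : f = w - 1 := by omega
      subst e
      have w2 : y (w + -2) = true := by
        have := (fr_spec a).1; ring_nf at this; ring_nf; exact this
      have t2 : Zer (stp y) (w+2) (w+3) := fun j h1 h2 => z j (by omega) h2
      have := AO3 H H' w2 z1 (h1 _ (by omega) (by omega)) (h1 _ (by omega) (by omega)) L'.2.1
        l3 l4 l5
      simp [fr_sh, stp_sh, LF_sh] at this
      simp [sh] at this
      rcases this with ((((⟨⟨⟨a, b⟩, c⟩, d⟩ | ⟨a, b⟩)) | (⟨⟨⟨⟨⟨a, b⟩, c⟩, d⟩, e⟩, p⟩ |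
        ⟨⟨⟨a, b⟩, c⟩, d⟩)) | (⟨⟨⟨⟨⟨⟨⟨a, b⟩, c⟩, d⟩, e⟩, p⟩, q⟩, r⟩ | ⟨⟨⟨⟨⟨a, b⟩, c⟩, d⟩, e⟩, p⟩)) |
        (⟨⟨⟨⟨⟨⟨⟨⟨⟨a, b⟩, c⟩, d⟩, e⟩, p⟩, q⟩, r⟩, s⟩, t⟩ | ⟨⟨⟨⟨⟨⟨⟨a, b⟩, c⟩, d⟩, e⟩, p⟩, q⟩, r⟩)
      · exact ⟨w + -1, by omega, Or.inl ⟨a, by omega, z.cons b (by omega)⟩, R⟩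
      · exact ⟨w + -1, by omega, Or.inr ⟨a, by omega, (t2.cons b (by omega)).cast_eq (by omega)⟩, R⟩
      · exact ⟨w + -3, by omega, Or.inl ⟨a, by omega, ((z.cons d (by omega)).cons c
          (by omega)).cons b (by omega)⟩, R⟩
      · exact ⟨w + -3, by omega, Or.inr ⟨a, by omega, (z.cons b (by omega)).cast_eq (by omega)⟩, R⟩
      · exact ⟨w + -5, by omega, Or.inl ⟨a, by omega, ((((z.cons p (by omega)).cons e
          (by omega)).cons d (by omega)).cons c (by omega)).cons b (by omega)⟩, R⟩
      · exact ⟨w + -5, by omega, Or.inr ⟨a, by omega, (((z.cons d (by omega)).cons c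
          (by omega)).cons b (by omega)).cast_eq (by omega)⟩, R⟩
      · exact ⟨w + -7, by omega, Or.inl ⟨a, by omega, ((((((z.cons r (by omega)).cons q
          (by omega)).cons p (by omega)).cons e (by omega)).cons d (by omega)).cons c
          (by omega)).cons b (by omega)⟩, R⟩
      · exact ⟨w + -7, by omega, Or.inr ⟨a, by omega, (((((z.cons p (by omega)).cons e
          (by omega)).cons d (by omega)).cons c (by omega)).cons b (by omega)).cast_eq
          (by omega)⟩, R⟩
    · omega

/-- The wall stays or moves by one. -/
theorem alpha_wall {y : ℤ → Bool} (h : NF2 y) (h' : NF2 (stp y)) {f w g : ℤ} (hl : Lef y f w)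
    (hp : (w - f) % 2 = 1) (h1 : Ons y w g) (hg : w + 4 ≤ g) :
    (stp y w = true ∧ ∃ f', (w - f') % 2 = 1 ∧ Lef (stp y) f' w) ∨
    (stp y w = false ∧ stp y (w-1) = false ∧
      ∃ f', (w + 1 - f') % 2 = 0 ∧ Lef (stp y) f' (w+1)) := by
  have H := NF2_sh h w
  have H' := NF2_sh' h' w
  by_cases hw : f + 3 ≤ w
  · refine Or.inl ⟨?_, alpha_left h h' hl hp hw⟩
    have z : Zer y (w-3) w := by
      rcases hl with ⟨a, b, c⟩ | ⟨a, b, c⟩ <;> exact fun j h1 h2 => c _ (by omega) (by omega)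
    have := BWa H H' (z _ (by omega) (by omega)) (z _ (by omega) (by omega))
      (z _ (by omega) (by omega)) (h1 _ (by omega) (by omega)) (h1 _ (by omega) (by omega))
      (h1 _ (by omega) (by omega))
    simpa [stp_sh, sh] using this
  · rcases hl with ⟨a, b, c⟩ | ⟨a, b, c⟩
    · have e : f = w - 1 := by omega
      subst e
      have w2 : y (w + -2) = true := by
        have := (fr_spec a).1; ring_nf at this; ring_nf; exact this
      have := AW2 H H' w2 (c _ (by omega) (by omega)) (h1 _ (by omega) (by omega))
        (h1 _ (by omega) (by omega)) (h1 _ (by omega) (by omega)) (h1 _ (by omega) (by omega))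
      simp [fr_sh, stp_sh, LF_sh] at this
      simp [sh] at this
      rcases this with ⟨a, b⟩ | ⟨⟨a, b⟩, c⟩
      · exact Or.inl ⟨b, w + -1, by omega, Or.inl ⟨a, by omega,
          (Zer.nil le_rfl).cons (fr_spec a).2 (by omega)⟩⟩
      · have z : Zer (stp y) (w + -1) (w+1) :=
          ((Zer.nil le_rfl).cons a rfl).cons b (by omega)
        refine Or.inr ⟨a, b, ?_⟩
        rcases c with c | c
        · exact ⟨w + -3, by omega, Or.inr ⟨c, by omega, z.cast_eq (by omega)⟩⟩
        · exact ⟨w + -1, by omega, Or.inl ⟨c, by omega, z⟩⟩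
    · omega

theorem fr_intro {y : ℤ → Bool} {f : ℤ} (h1 : y (f-1) = true) (h2 : y f = false)
    (h3 : y (f-2) = true ∨ y (f-3) = false) : fr y f = true := by
  unfold fr frb
  rcases h3 with h3 | h3 <;> simp [h1, h2, h3]

theorem alpha_step {n : ℕ} (hn : Odd n) {y : ℤ → Bool} (hy : Good n y) {f w g : ℤ}
    (hl : Lef y f w) (hp : (w - f) % 2 = 1) (hr : Rig y w g) (ho : (g - w) % 2 = 0)
    (hg : w + 4 ≤ g) :
    ∃ f' g', (w - f') % 2 = 1 ∧ Lef (stp y) f' w ∧ Rig (stp y) w g' ∧ (g' - w) % 2 = 0 ∧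
      ((LF (stp y) g' = true ∧ g' = g - 2) ∨
        (¬ LF y g = true ∧ (LF (stp y) g' = true ∨ g' = g + 2))) := by
  have h := NF2_of_good hn hy
  have h' := NF2_of_good hn hy.step
  obtain ⟨-, h1, hf⟩ := hr
  have W := alpha_wall h h' hl hp h1 hg
  have st := h1.step
  have key := AR (NF2_sh h g) (NF2_sh' h' g) (h1 _ (by omega) (by omega))
    (h1 _ (by omega) (by omega)) (h1 _ (by omega) (by omega)) (h1 _ (by omega) (by omega))
    (by simpa [sh] using (fr_spec hf).2)
  have main : (∃ g', Ons (stp y) (w+1) g' ∧ w + 1 < g' ∧ fr (stp y) g' = true ∧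
      (g' - w) % 2 = 0 ∧ ((LF (stp y) g' = true ∧ g' = g - 2) ∨
        (¬ LF y g = true ∧ (LF (stp y) g' = true ∨ g' = g + 2)))) ∨
      (stp y (g + -3) = true ∧ Zer (stp y) (g + -2) (g+4) ∧ Rig (stp y) (g+4) (g+5)) := by
    by_cases hL : LF y g = true
    · simp [fr_sh, stp_sh, LF_sh, hf, hL] at key
      simp [sh] at key
      exact Or.inl ⟨g + -2, st, by omega, fr_of_LF key.1, by omega, Or.inl ⟨key.1, rfl⟩⟩
    · rw [Bool.not_eq_true] at hL
      simp [fr_sh, stp_sh, LF_sh, hf, hL] at key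
      simp [sh] at key
      rcases key with ((⟨⟨⟨⟨⟨a, b⟩, c⟩, d⟩, e⟩, p⟩ | ⟨a, b⟩) | ⟨⟨⟨a, b⟩, c⟩, d⟩) |
        ⟨⟨⟨⟨⟨⟨⟨⟨a, b⟩, c⟩, d⟩, e⟩, p⟩, q⟩, r⟩, s⟩
      · exact Or.inl ⟨g + 2, (((st.snoc c (by omega) rfl).snoc d (by omega) rfl).snoc e (by omega)
          rfl).snoc p (by omega) (by omega), by omega, a, by omega,
          Or.inr ⟨by simp [hL], Or.inr rfl⟩⟩
      · exact Or.inl ⟨g + -2, st, by omega, fr_of_LF a, by omega, Or.inl ⟨a, rfl⟩⟩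
      · exact Or.inl ⟨g, (st.snoc c (by omega) rfl).snoc d (by omega) (by omega), by omega,
          fr_of_LF a, by omega, Or.inr ⟨by simp [hL], Or.inl a⟩⟩
      · exact Or.inr ⟨a, ((((((Zer.nil le_rfl).cons q (a := g+3) rfl).cons p (by omega)).cons e
          (by omega)).cons d (by omega)).cons c (by omega)).cons b (by omega) |>.to_eq (by omega),
          by omega, (Ons.nil le_rfl).snoc r rfl (by omega), s⟩
  rcases main with ⟨g', a, b, c, d, e⟩ | ⟨a, b, c⟩
  · rcases W with ⟨w1, f', w2, w3⟩ | ⟨w1, w0, f', w2, w3⟩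
    · exact ⟨f', g', w2, w3, ⟨by omega, a.cons w1 rfl, c⟩, d, e⟩
    · exact (beta hn hy.step w3 w2 ⟨b, a, c⟩ (by omega)).elim
  · have F : fr (stp y) (g + -2) = true := by
      refine fr_intro (by rw [show g + -2 - 1 = g + -3 by ring]; exact a) (b _ le_rfl (by omega)) ?_
      by_cases e : g = w + 4
      · subst e
        rw [show w + 4 + -2 - 2 = w by ring, show w + 4 + -2 - 3 = w - 1 by ring]
        rcases W with W | W
        · exact Or.inl W.1
        · exact Or.inr W.2.1
      · exact Or.inl (st _ (by omega) (by omega))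
    exact (beta hn hy.step (Or.inl ⟨F, by omega, b⟩) (by omega) c (by omega)).elim

theorem alpha_L {n : ℕ} (hn : Odd n) : ∀ (N : ℕ) {y : ℤ → Bool}, Good n y → ∀ {f w g : ℤ},
    Lef y f w → (w - f) % 2 = 1 → Rig y w g → (g - w) % 2 = 0 → LF y g = true →
    g - w ≤ N → False := by
  intro N
  induction N with
  | zero =>
    intro y hy f w g hl hp hr ho hL hN
    have := hr.1
    omega
  | succ N ih =>
    intro y hy f w g hl hp hr ho hL hN
    have := hr.1
    by_cases e : g = w + 2
    · obtain ⟨f', a, b, c⟩ := alpha_two (NF2_of_good hn hy) (NF2_of_good hn hy.step) hl hp hr e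
      exact beta hn hy.step b a c (by omega)
    · obtain ⟨f', g', a, b, c, d, e⟩ := alpha_step hn hy hl hp hr ho (by omega)
      rcases e with ⟨e1, e2⟩ | ⟨e1, -⟩
      · exact ih hy.step b a c d e1 (by push_cast at hN; omega)
      · exact e1 hL

theorem alpha_R {n : ℕ} (hn : Odd n) : ∀ (N : ℕ) {y : ℤ → Bool}, Good n y → ∀ {f w g : ℤ},
    Lef y f w → (w - f) % 2 = 1 → Rig y w g → (g - w) % 2 = 0 →
    n - (g - w) ≤ N → False := by
  intro N
  induction N with
  | zero =>
    intro y hy f w g hl hp hr ho hN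
    have z1 : y (w - 1) = false := by
      rcases hl with ⟨a, b, c⟩ | ⟨a, b, c⟩ <;> exact c _ (by omega) (by omega)
    have hpos : 0 < n := hn.pos
    have a := hy.2 (w-1)
    rw [z1, hr.2.1 (w-1+n) (by omega) (by push_cast at hN; omega)] at a
    simp at a
  | succ N ih =>
    intro y hy f w g hl hp hr ho hN
    have := hr.1
    by_cases e : g = w + 2
    · obtain ⟨f', a, b, c⟩ := alpha_two (NF2_of_good hn hy) (NF2_of_good hn hy.step) hl hp hr e
      exact beta hn hy.step b a c (by omega)
    · obtain ⟨f', g', a, b, c, d, e⟩ := alpha_step hn hy hl hp hr ho (by omega)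
      rcases e with ⟨e1, e2⟩ | ⟨-, e1 | e1⟩
      · exact alpha_L hn (g' - w).toNat hy.step b a c d e1 (by omega)
      · exact alpha_L hn (g' - w).toNat hy.step b a c d e1 (by omega)
      · exact ih hy.step b a c d (by push_cast at hN; omega)

/-- There is no pair of consecutive fronts at odd distance. -/
theorem no_state {n : ℕ} (hn : Odd n) {y : ℤ → Bool} (hy : Good n y) {f w g : ℤ}
    (hl : Lef y f w) (hr : Rig y w g) (ho : (g - f) % 2 = 1) : False := by
  rcases (by omega : (w - f) % 2 = 0 ∨ (w - f) % 2 = 1) with hp | hp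
  · exact beta hn hy hl hp hr (by omega)
  · exact alpha_R hn (n - (g - w)).toNat hy hl hp hr (by omega) (by omega)

theorem split_word {y : ℤ → Bool} (g : ℤ) (hg : y (g-1) = true) : ∀ (N : ℕ) (s : ℤ),
    s + N + 1 = g → (∀ j, s < j → j < g → ¬ (y (j-1) = true ∧ y j = false)) →
    ∃ w, s ≤ w ∧ w < g ∧ Zer y s w ∧ Ons y w g := by
  intro N
  induction N with
  | zero =>
    intro s hs _
    have e : g - 1 = s := by push_cast at hs; omega
    rw [e] at hg
    exact ⟨s, le_rfl, by omega, Zer.nil le_rfl, (Ons.nil le_rfl).cons hg (by omega)⟩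
  | succ N ih =>
    intro s hs hj
    push_cast at hs
    obtain ⟨w, a, b, c, d⟩ := ih (s+1) (by omega) (fun j h1 h2 => hj j (by omega) h2)
    cases hv : y s with
    | false => exact ⟨w, by omega, b, c.cons hv rfl, d⟩
    | true =>
      have e : w = s + 1 := by
        by_contra hne
        exact hj (s+1) (by omega) (by omega) ⟨by rw [add_sub_cancel_right]; exact hv,
          c _ le_rfl (by omega)⟩
      exact ⟨s, le_rfl, by omega, Zer.nil le_rfl, d.cons hv e⟩

theorem fr_or_LF {y : ℤ → Bool} {j : ℤ} (h1 : y (j-1) = true) (h2 : y j = false) :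
    fr y j = true ∨ LF y (j-2) = true := by
  unfold fr frb LF
  have e1 : j - 2 - 1 = j - 3 := by ring
  have e2 : j - 2 + 1 = j - 1 := by ring
  have e3 : j - 2 + 2 = j := by ring
  have e4 : j - 2 + 3 = j + 1 := by ring
  simp only [e1, e2, e3, e4, h1, h2]
  cases y (j-3) <;> cases y (j-2) <;> cases y (j+1) <;> simp

theorem no_odd {n : ℕ} (hn : Odd n) {y : ℤ → Bool} (hy : Good n y) : ∀ (N : ℕ) (f g : ℤ),
    f < g → g - f ≤ N → (g - f) % 2 = 1 → fr y f = true → fr y g = true → False := by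
  intro N
  induction N with
  | zero => intros; omega
  | succ N ih =>
    intro f g hfg hN ho hf hg
    push_cast at hN
    by_cases hm : ∃ m, f < m ∧ m < g ∧ fr y m = true
    · obtain ⟨m, m1, m2, m3⟩ := hm
      rcases (by omega : (m - f) % 2 = 1 ∨ (g - m) % 2 = 1) with e | e
      · exact ih f m m1 (by omega) e hf m3
      · exact ih m g m2 (by omega) e m3 hg
    · push Not at hm
      have sf := fr_spec hf
      have sg := fr_spec hg
      have ten : ∀ j, f < j → j < g → y (j-1) = true → y j = false → j = f + 2 ∧ LF y f = true := by
        intro j j1 j2 j3 j4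
        have L := (fr_or_LF j3 j4).resolve_left (hm j j1 j2)
        have hle : j - 2 ≤ f := by
          by_contra hlt
          exact hm (j-2) (by omega) (by omega) (fr_of_LF L)
        have hne : j ≠ f + 1 := by
          rintro rfl
          rw [add_sub_cancel_right, sf.2] at j3
          simp at j3
        have e : j = f + 2 := by omega
        refine ⟨e, ?_⟩
        rw [e, add_sub_cancel_right] at L
        exact L
      by_cases hL : LF y f = true
      · have L := LF_spec hL
        have n1 : g ≠ f + 1 := by
          rintro rfl
          have := sg.1
          rw [add_sub_cancel_right, sf.2] at this
          simp at this
        have n3 : g ≠ f + 3 := by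
          rintro rfl
          have := sg.1
          rw [show f + 3 - 1 = f + 2 by ring, L.2.2.2.1] at this
          simp at this
        obtain ⟨w, a, b, c, d⟩ := split_word g sg.1 (g - 1 - (f+4)).toNat (f+4) (by omega)
          (fun j h1 h2 h3 => by have := (ten j (by omega) h2 h3.1 h3.2).1; omega)
        exact no_state hn hy (Or.inr ⟨hL, a, (c.cons L.2.2.2.2 (by omega)).cons L.2.2.2.1
          (by omega)⟩) ⟨b, d, hg⟩ ho
      · obtain ⟨w, a, b, c, d⟩ := split_word g sg.1 (g - 1 - f).toNat f (by omega)
          (fun j h1 h2 h3 => hL (ten j (by omega) h2 h3.1 h3.2).2)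
        have hne : w ≠ f := by
          rintro rfl
          have := d w le_rfl b
          rw [sf.2] at this
          simp at this
        exact no_state hn hy (Or.inl ⟨hf, by omega, c⟩) ⟨b, d, hg⟩ ho

theorem exists_ten {y : ℤ → Bool} {a : ℤ} (h1 : y a = true) : ∀ N : ℕ, y (a + N) = false →
    ∃ j, y (j-1) = true ∧ y j = false := by
  intro N
  induction N with
  | zero => intro h; simp [h1] at h
  | succ N ih =>
    intro h
    cases hv : y (a + N) with
    | false => exact ih hv
    | true =>
      refine ⟨a + (N+1 : ℕ), ?_, h⟩
      push_cast
      rw [show a + ((N:ℤ) + 1) - 1 = a + N by ring]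
      exact hv

theorem Xs_no_orderedBlock (n : ℕ) (hn : Odd n) (x : ZMod n → Bool) (hx : InXs x) :
    ¬ ∃ (i : ZMod n) (k : ℕ), IsOrderedBlock x i k := by
  rintro ⟨i, k, -, ⟨h0, h1⟩, -⟩
  have hpos : 0 < n := hn.pos
  have : NeZero n := ⟨hpos.ne'⟩
  have hy := good_of_inXs x hx
  obtain ⟨a, rfl⟩ := ZMod.intCast_surjective i
  set y : ℤ → Bool := fun k : ℤ => x (k : ZMod n) with hyd
  have y0 : y a = false := h0
  have y1 : y (a+1) = true := by simp only [hyd]; push_cast; exact h1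
  have y2 : y (a + 1 + (n - 1 : ℕ)) = false := by
    have := hy.2 a
    rw [y0] at this
    rw [← this]
    congr 1
    push_cast [Nat.cast_sub hpos]
    ring
  obtain ⟨j, j1, j2⟩ := exists_ten y1 _ y2
  have hfr : ∃ f, fr y f = true := by
    rcases fr_or_LF j1 j2 with h | h
    · exact ⟨_, h⟩
    · exact ⟨_, fr_of_LF h⟩
  obtain ⟨f, hf⟩ := hfr
  have per : fr y (f + n) = true := by
    have e : ∀ c : ℤ, y (f + n + c) = y (f + c) := by
      intro c
      rw [show f + (n:ℤ) + c = f + c + n by ring]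
      exact hy.2 _
    have e' : y (f + n) = y f := hy.2 f
    have := e (-1)
    have := e (-2)
    have := e (-3)
    have := e 1
    unfold fr at hf ⊢
    simp only [sub_eq_add_neg] at *
    simp_all
  obtain ⟨m, hm⟩ := hn
  exact no_odd ⟨m, hm⟩ hy n f (f + n) (by omega) (by omega) (by omega) hf per
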